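/- arXiv:2510.23903 — 8 statements merged into one kernel-verified Lean document; each statement's English description precedes it below -/
import Mathlib

section
/- For every composition σ = (r_1,...,r_k) of a positive integer n, there exist nonnegative integers γ_0, γ_1, ..., γ_{⌊n/2⌋} such that the polynomial h(σ,t) = Σ_{i=0}^{n} h_i(σ) t^i satisfies h(σ,t) = Σ_{i=0}^{⌊n/2⌋} γ_i t^i (1+t)^{n-2i} (i.e., h(σ,t) is gamma-positive). -/
open Finset Polynomial

/-- `pSum σ i = r₁ + ⋯ + rᵢ`, the `i`-th partial sum of the composition `σ`. -/
def pSum (σ : List ℕ) (i : ℕ) : ℕ := (σ.take i).sum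

/-- Membership in the set `P_σ ⊆ ℕⁿ`: the partial sum of the first `s_i`
coordinates is at most `s_i` for every `i ∈ [k]`. -/
def memP (n : ℕ) (σ : List ℕ) (a : Fin n → ℕ) : Prop :=
  ∀ i, 1 ≤ i → i ≤ σ.length →
    (∑ j ∈ Finset.univ.filter (fun j : Fin n => (j : ℕ) < pSum σ i), a j) ≤ pSum σ i

/-- The number of nonzero coordinates of a tuple. -/
def nonzeroCount {n : ℕ} (a : Fin n → ℕ) : ℕ :=
  (Finset.univ.filter (fun j => a j ≠ 0)).card

/-- `h_i(σ)`: the number of points of `P_σ` with exactly `i` nonzero coordinates. -/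
noncomputable def hVec (n : ℕ) (σ : List ℕ) (i : ℕ) : ℕ :=
  {a : Fin n → ℕ | memP n σ a ∧ nonzeroCount a = i}.ncard

/-- Partial sums of a tuple. -/
def bSum {n : ℕ} (a : Fin n → ℕ) (s : ℕ) : ℕ :=
  ∑ j ∈ Finset.univ.filter (fun j : Fin n => (j : ℕ) < s), a j

/-- Number of elements of `S` below `s`. -/
def cnt {n : ℕ} (S : Finset (Fin n)) (s : ℕ) : ℕ := (S.filter (fun j : Fin n => (j : ℕ) < s)).card

/-- Support of a tuple. -/
def supp {n : ℕ} (a : Fin n → ℕ) : Finset (Fin n) := Finset.univ.filter (fun j => a j ≠ 0)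

/-- Set of (shifted) nonzero partial sums. -/
def tSet {n : ℕ} (a : Fin n → ℕ) : Finset (Fin n) :=
  Finset.univ.filter (fun t : Fin n => ∃ j : Fin n, a j ≠ 0 ∧ bSum a (j + 1) = t + 1)

lemma filter_lt_succ {n : ℕ} (S : Finset (Fin n)) (j : Fin n) :
    S.filter (fun k : Fin n => (k : ℕ) < (j : ℕ) + 1) =
      if j ∈ S then insert j (S.filter (fun k : Fin n => (k : ℕ) < (j : ℕ)))
      else S.filter (fun k : Fin n => (k : ℕ) < (j : ℕ)) := by
  split_ifs with h
  · ext k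
    simp only [mem_filter, mem_insert, Fin.ext_iff]
    constructor
    · rintro ⟨h1, h2⟩
      by_cases h3 : (k : ℕ) = j
      · exact Or.inl h3
      · exact Or.inr ⟨h1, by omega⟩
    · rintro (h1 | ⟨h1, h2⟩)
      · have : k = j := Fin.ext h1
        subst this
        exact ⟨h, by omega⟩
      · exact ⟨h1, by omega⟩
  · ext k
    simp only [mem_filter]
    constructor
    · rintro ⟨h1, h2⟩
      refine ⟨h1, ?_⟩
      have : k ≠ j := fun e => h (e ▸ h1)
      have : (k : ℕ) ≠ j := fun e => this (Fin.ext e)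
      omega
    · rintro ⟨h1, h2⟩
      exact ⟨h1, by omega⟩

lemma bSum_zero {n : ℕ} (a : Fin n → ℕ) : bSum a 0 = 0 := by simp [bSum]

lemma bSum_succ {n : ℕ} (a : Fin n → ℕ) (j : Fin n) :
    bSum a (j + 1) = bSum a j + a j := by
  unfold bSum
  rw [filter_lt_succ, if_pos (mem_univ j), sum_insert (by simp)]
  ring

lemma bSum_mono {n : ℕ} (a : Fin n → ℕ) : Monotone (bSum a) := by
  intro s t h
  unfold bSum
  apply sum_le_sum_of_subset
  intro j
  simp only [mem_filter]
  rintro ⟨h1, h2⟩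
  exact ⟨h1, by omega⟩

lemma bSum_all {n : ℕ} (a : Fin n → ℕ) (s : ℕ) : bSum a s ≤ bSum a n := by
  unfold bSum
  apply sum_le_sum_of_subset
  intro j
  simp

lemma cnt_zero {n : ℕ} (S : Finset (Fin n)) : cnt S 0 = 0 := by simp [cnt]

lemma cnt_succ {n : ℕ} (S : Finset (Fin n)) (j : Fin n) :
    cnt S (j + 1) = cnt S j + if j ∈ S then 1 else 0 := by
  unfold cnt
  rw [filter_lt_succ]
  split_ifs with h
  · rw [card_insert_of_notMem (by simp)]
  · rfl

lemma cnt_mono {n : ℕ} (S : Finset (Fin n)) : Monotone (cnt S) := by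
  intro s t h
  unfold cnt
  apply card_le_card
  intro j
  simp only [mem_filter]
  rintro ⟨h1, h2⟩
  exact ⟨h1, by omega⟩

lemma cnt_all {n : ℕ} (S : Finset (Fin n)) : cnt S n = S.card := by
  simp [cnt]

lemma cnt_le {n : ℕ} (S : Finset (Fin n)) (s : ℕ) : cnt S s ≤ S.card := card_filter_le _ _

lemma bSum_strict {n : ℕ} (a : Fin n → ℕ) {i j : Fin n} (h : i < j) (hj : a j ≠ 0) :
    bSum a (i + 1) < bSum a (j + 1) := by
  have h1 := bSum_mono a (show (i : ℕ) + 1 ≤ j from h)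
  have h2 := bSum_succ a j
  omega

lemma cnt_tSet {n : ℕ} (a : Fin n → ℕ) (ha : bSum a n ≤ n) (m : ℕ) :
    cnt (tSet a) m = ((supp a).filter (fun j : Fin n => bSum a (j + 1) ≤ m)).card := by
  unfold cnt
  symm
  have hpos : ∀ j : Fin n, j ∈ supp a → 0 < bSum a (j + 1) := by
    intro j hj
    have := bSum_succ a j
    simp only [supp, mem_filter] at hj
    omega
  have hle : ∀ j : Fin n, bSum a (j + 1) ≤ n := fun j => (bSum_all a _).trans ha
  refine card_bij (fun j hj => ⟨bSum a (j + 1) - 1, ?_⟩) ?_ ?_ ?_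
  · have h1 := hpos j (mem_filter.1 hj).1
    have h2 := hle j
    omega
  · intro j hj
    have h1 := hpos j (mem_filter.1 hj).1
    simp only [mem_filter, supp, tSet, mem_univ, true_and] at hj ⊢
    exact ⟨⟨j, hj.1, by omega⟩, by omega⟩
  · intro i hi j hj hij
    have h1 := hpos j (mem_filter.1 hj).1
    have h2 := hpos i (mem_filter.1 hi).1
    simp only [mem_filter, supp, mem_univ, true_and] at hi hj
    simp only [Fin.mk.injEq] at hij
    rcases lt_trichotomy i j with h | h | h
    · have := bSum_strict a h hj.1
      omega
    · exact h
    · have := bSum_strict a h hi.1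
      omega
  · intro t ht
    simp only [mem_filter, tSet, mem_univ, true_and] at ht
    obtain ⟨⟨j, hj, e⟩, h2⟩ := ht
    refine ⟨j, ?_, ?_⟩
    · simp only [mem_filter, supp, mem_univ, true_and]
      exact ⟨hj, by omega⟩
    · apply Fin.ext
      simp [e]

lemma card_tSet {n : ℕ} (a : Fin n → ℕ) (ha : bSum a n ≤ n) :
    (tSet a).card = (supp a).card := by
  rw [← cnt_all, cnt_tSet a ha, filter_true_of_mem]
  intro j _
  exact (bSum_all a _).trans ha

lemma bSum_le_iff {n : ℕ} (a : Fin n → ℕ) (ha : bSum a n ≤ n) (s m : ℕ) :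
    bSum a s ≤ m ↔ cnt (supp a) s ≤ cnt (tSet a) m := by
  rw [cnt_tSet a ha]
  constructor
  · intro h
    unfold cnt
    apply card_le_card
    intro j
    simp only [mem_filter]
    rintro ⟨h1, h2⟩
    exact ⟨h1, (bSum_mono a (show (j : ℕ) + 1 ≤ s from h2)).trans h⟩
  · intro h
    by_contra hlt
    push Not at hlt
    -- some index in the support below `s` with partial sum above `m`
    have hex : ∃ j : Fin n, j ∈ supp a ∧ (j : ℕ) < s ∧ m < bSum a (j + 1) := by
      by_contra hno
      push Not at hno
      have key : ∀ u : ℕ, u ≤ n → u ≤ s → bSum a u ≤ m := by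
        intro u
        induction u with
        | zero => intro _ _; simp [bSum_zero]
        | succ u ih =>
          intro hu hus
          by_cases h0 : a ⟨u, hu⟩ = 0
          · have := bSum_succ a ⟨u, hu⟩
            simp only [h0] at this
            rw [this]
            exact ih (by omega) (by omega)
          · exact hno ⟨u, hu⟩ (by simp [supp, h0]) hus
      rcases le_total s n with h1 | h1
      · exact absurd (key s h1 le_rfl) (by omega)
      · have := key n le_rfl h1
        have := bSum_all a s
        omega
    obtain ⟨j, hj, hjs, hjm⟩ := hex
    have : ((supp a).filter (fun j : Fin n => bSum a (j + 1) ≤ m)) ⊂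
        ((supp a).filter (fun j : Fin n => (j : ℕ) < s)) := by
      rw [Finset.ssubset_iff_of_subset]
      · exact ⟨j, by simp [hj, hjs], by simp [hjm]⟩
      · intro i
        simp only [mem_filter]
        rintro ⟨h1, h2⟩
        refine ⟨h1, ?_⟩
        by_contra h3
        have := bSum_mono a (show s ≤ (i : ℕ) + 1 by omega)
        omega
    have := card_lt_card this
    unfold cnt at h
    omega

lemma tuple_inj {n : ℕ} (a b : Fin n → ℕ) (ha : bSum a n ≤ n) (hb : bSum b n ≤ n)
    (hS : supp a = supp b) (hT : tSet a = tSet b) : a = b := by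
  have h : ∀ s, bSum a s = bSum b s := by
    intro s
    apply le_antisymm
    · rw [bSum_le_iff a ha, hS, hT, ← bSum_le_iff b hb]
    · rw [bSum_le_iff b hb, ← hS, ← hT, ← bSum_le_iff a ha]
  funext j
  have h1 := bSum_succ a j
  have h2 := bSum_succ b j
  rw [h, h] at h1
  omega

lemma tuple_surj {n : ℕ} (S T : Finset (Fin n)) (hST : S.card = T.card) :
    ∃ a : Fin n → ℕ, bSum a n ≤ n ∧ supp a = S ∧ tSet a = T := by
  classical
  have hex : ∀ s, ∃ m, cnt S s ≤ cnt T m :=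
    fun s => ⟨n, by rw [cnt_all, ← hST]; exact cnt_le S s⟩
  let B : ℕ → ℕ := fun s => Nat.find (hex s)
  have hB : ∀ s, cnt S s ≤ cnt T (B s) := fun s => Nat.find_spec (hex s)
  have hmin : ∀ s m, cnt S s ≤ cnt T m → B s ≤ m := fun s m h => Nat.find_min' (hex s) h
  have hBn : ∀ s, B s ≤ n := fun s => hmin s n (by rw [cnt_all, ← hST]; exact cnt_le S s)
  have hBmono : Monotone B := fun s t h => hmin s _ ((cnt_mono S h).trans (hB t))
  have hB0 : B 0 = 0 := Nat.le_zero.1 (hmin 0 0 (by simp [cnt_zero]))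
  -- the minimum is attained exactly
  have hstep : ∀ s u (hu : u < n), B s = u + 1 →
      (⟨u, hu⟩ : Fin n) ∈ T ∧ cnt T (u + 1) = cnt S s := by
    intro s u hu e
    have h1 : ¬ cnt S s ≤ cnt T u := fun h => by
      have := hmin s u h
      omega
    have h2 := hB s
    rw [e] at h2
    have h3 := cnt_succ T ⟨u, hu⟩
    simp only at h3
    split_ifs at h3 with h4
    · exact ⟨h4, by omega⟩
    · omega
  have heq : ∀ s, cnt T (B s) = cnt S s := by
    intro s
    rcases h : B s with _ | u
    · have := hB s
      rw [h, cnt_zero] at this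
      rw [cnt_zero]
      omega
    · have := hBn s
      exact (hstep s u (by omega) h).2
  let a : Fin n → ℕ := fun j => B (j + 1) - B j
  have hab : ∀ s, s ≤ n → bSum a s = B s := by
    intro s
    induction s with
    | zero => intro _; rw [bSum_zero, hB0]
    | succ u ih =>
      intro hu
      have h1 := bSum_succ a ⟨u, hu⟩
      simp only at h1
      rw [h1, ih (by omega)]
      have := hBmono (Nat.le_succ u)
      simp only [a]
      simp only [Nat.succ_eq_add_one] at this
      omega
  have han : bSum a n ≤ n := by rw [hab n le_rfl]; exact hBn n
  have hsupp : supp a = S := by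
    ext j
    simp only [supp, mem_filter, mem_univ, true_and]
    have h3 := cnt_succ S j
    constructor
    · intro h
      by_contra hj
      rw [if_neg hj] at h3
      apply h
      have := hmin (j + 1) (B j) (by rw [h3]; exact hB j)
      simp only [a]
      omega
    · intro hj h
      rw [if_pos hj] at h3
      have h4 := hBmono (Nat.le_succ (j : ℕ))
      simp only [Nat.succ_eq_add_one] at h4
      simp only [a] at h
      have h5 : B (j + 1) = B j := by omega
      have h6 := heq (j + 1)
      have h7 := heq j
      rw [h5] at h6
      omega
  refine ⟨a, han, hsupp, ?_⟩
  apply eq_of_subset_of_card_le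
  · intro t ht
    simp only [tSet, mem_filter, mem_univ, true_and] at ht
    obtain ⟨j, hj, e⟩ := ht
    rw [hab _ (by omega)] at e
    exact (hstep _ _ t.2 e).1
  · rw [card_tSet a han, hsupp, hST]

/-- The pair condition. -/
def Good (n : ℕ) (σ : List ℕ) (S T : Finset (Fin n)) : Prop :=
  S.card = T.card ∧ ∀ i, 1 ≤ i → i ≤ σ.length → cnt S (pSum σ i) ≤ cnt T (pSum σ i)

lemma memP_total (n : ℕ) (hn : 0 < n) (σ : List ℕ) (hsum : σ.sum = n) (a : Fin n → ℕ)
    (h : memP n σ a) : bSum a n ≤ n := by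
  have hl : 1 ≤ σ.length := by
    rcases σ with _ | ⟨x, l⟩
    · simp at hsum; omega
    · simp
  have := h σ.length hl le_rfl
  have e : pSum σ σ.length = n := by simp [pSum, hsum]
  rw [e] at this
  exact this

lemma memP_iff_good (n : ℕ) (σ : List ℕ) (a : Fin n → ℕ) (ha : bSum a n ≤ n) :
    memP n σ a ↔ Good n σ (supp a) (tSet a) := by
  unfold Good
  rw [card_tSet a ha]
  simp only [true_and]
  unfold memP
  refine forall_congr' fun i => forall_congr' fun _ => forall_congr' fun _ => ?_
  exact bSum_le_iff a ha _ _

open Classical in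
lemma hVec_eq (n : ℕ) (hn : 0 < n) (σ : List ℕ) (hsum : σ.sum = n) (i : ℕ) :
    hVec n σ i = ((univ : Finset (Finset (Fin n) × Finset (Fin n))).filter
      (fun p => Good n σ p.1 p.2 ∧ p.1.card = i)).card := by
  unfold hVec
  rw [← Set.ncard_coe_finset]
  refine Set.ncard_congr (fun a _ => (supp a, tSet a)) ?_ ?_ ?_
  · rintro a ⟨h1, h2⟩
    have h3 := memP_total n hn σ hsum a h1
    simp only [coe_filter, mem_univ, true_and, Set.mem_ofPred_eq]
    exact ⟨(memP_iff_good n σ a h3).1 h1, h2⟩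
  · rintro a b ⟨h1, _⟩ ⟨h2, _⟩ h
    simp only [Prod.mk.injEq] at h
    exact tuple_inj a b (memP_total n hn σ hsum a h1) (memP_total n hn σ hsum b h2) h.1 h.2
  · rintro ⟨S, T⟩ h
    simp only [coe_filter, mem_univ, true_and, Set.mem_ofPred_eq] at h
    obtain ⟨a, h1, h2, h3⟩ := tuple_surj S T h.1.1
    refine ⟨a, ⟨?_, ?_⟩, ?_⟩
    · rw [memP_iff_good n σ a h1, h2, h3]
      exact h.1
    · rw [← h.2, ← h2]
      rfl
    · simp [h2, h3]

lemma cnt_union {n : ℕ} (S T : Finset (Fin n)) (h : Disjoint S T) (s : ℕ) :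
    cnt (S ∪ T) s = cnt S s + cnt T s := by
  unfold cnt
  rw [filter_union, card_union_of_disjoint (disjoint_filter_filter h)]

lemma good_union (n : ℕ) (σ : List ℕ) (U D E : Finset (Fin n)) (h1 : Disjoint D E)
    (h2 : Disjoint U E) : Good n σ (D ∪ E) (U ∪ E) ↔ Good n σ D U := by
  unfold Good
  simp only [cnt_union _ _ h1, cnt_union _ _ h2, card_union_of_disjoint h1,
    card_union_of_disjoint h2, add_le_add_iff_right, add_left_inj]

open Classical in
lemma sum_good (n : ℕ) (σ : List ℕ) :
    (∑ p ∈ (univ : Finset (Finset (Fin n) × Finset (Fin n))).filter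
      (fun p => Good n σ p.1 p.2), (X : Polynomial ℕ) ^ p.1.card) =
    ∑ q ∈ (univ : Finset (Finset (Fin n) × Finset (Fin n))).filter
      (fun q => Disjoint q.1 q.2 ∧ Good n σ q.1 q.2),
        (X : Polynomial ℕ) ^ q.1.card * (1 + X) ^ (n - 2 * q.1.card) := by
  have hR : ∀ q ∈ (univ : Finset (Finset (Fin n) × Finset (Fin n))).filter
      (fun q => Disjoint q.1 q.2 ∧ Good n σ q.1 q.2),
        (X : Polynomial ℕ) ^ q.1.card * (1 + X) ^ (n - 2 * q.1.card) =
        ∑ E ∈ ((q.1 ∪ q.2)ᶜ).powerset, (X : Polynomial ℕ) ^ (q.1.card + E.card) := by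
    intro q hq
    simp only [mem_filter, mem_univ, true_and] at hq
    have hc : ((q.1 ∪ q.2)ᶜ).card = n - 2 * q.1.card := by
      rw [card_compl, card_union_of_disjoint hq.1, Fintype.card_fin, ← hq.2.1, two_mul]
    have := Finset.sum_pow_mul_eq_add_pow (X : Polynomial ℕ) 1 ((q.1 ∪ q.2)ᶜ)
    simp only [one_pow, mul_one] at this
    rw [← hc, add_comm (1 : Polynomial ℕ) X, ← this, mul_sum]
    simp only [pow_add]
  rw [sum_congr rfl hR, sum_sigma']
  refine sum_bij' (fun p _ => ⟨(p.1 \ p.2, p.2 \ p.1), p.1 ∩ p.2⟩)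
    (fun x _ => (x.1.1 ∪ x.2, x.1.2 ∪ x.2)) ?_ ?_ ?_ ?_ ?_
  · rintro ⟨S, T⟩ h
    simp only [mem_filter, mem_univ, true_and, mem_sigma, mem_powerset] at h ⊢
    refine ⟨⟨disjoint_sdiff_sdiff, ?_⟩, ?_⟩
    · rw [← good_union n σ (T \ S) (S \ T) (S ∩ T)]
      · rw [sdiff_union_inter, inter_comm, sdiff_union_inter]
        exact h
      · exact disjoint_sdiff_inter S T
      · rw [inter_comm]
        exact disjoint_sdiff_inter T S
    · intro x
      simp only [mem_inter, mem_compl, mem_union, mem_sdiff]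
      tauto
  · rintro ⟨⟨D, U⟩, E⟩ h
    simp only [mem_filter, mem_univ, true_and, mem_sigma, mem_powerset] at h ⊢
    obtain ⟨⟨h1, h2⟩, h3⟩ := h
    rw [good_union]
    · exact h2
    · rw [Finset.disjoint_left]
      intro x hx hE
      have := h3 hE
      simp [hx] at this
    · rw [Finset.disjoint_left]
      intro x hx hE
      have := h3 hE
      simp [hx] at this
  · rintro ⟨S, T⟩ h
    simp only [Prod.mk.injEq]
    exact ⟨sdiff_union_inter S T, by rw [inter_comm, sdiff_union_inter]⟩
  · rintro ⟨⟨D, U⟩, E⟩ h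
    simp only [mem_filter, mem_univ, true_and, mem_sigma, mem_powerset] at h
    obtain ⟨⟨h1, h2⟩, h3⟩ := h
    have hE : ∀ x, x ∈ E → x ∉ D ∧ x ∉ U := by
      intro x hx
      simpa using h3 hx
    have hDU : ∀ x, x ∈ D → x ∉ U := fun x h => Finset.disjoint_left.1 h1 h
    have e1 : (D ∪ E) \ (U ∪ E) = D := by
      ext x
      have := hE x
      have := hDU x
      simp only [mem_sdiff, mem_union]
      tauto
    have e2 : (U ∪ E) \ (D ∪ E) = U := by
      ext x
      have := hE x
      have := hDU x
      simp only [mem_sdiff, mem_union]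
      tauto
    have e3 : (D ∪ E) ∩ (U ∪ E) = E := by
      ext x
      have := hE x
      have := hDU x
      simp only [mem_inter, mem_union]
      tauto
    simp only [e1, e2, e3]
  · rintro ⟨S, T⟩ h
    simp only
    rw [card_sdiff_add_card_inter]

/-- Gamma-positivity of `h(σ,t)` for every composition `σ` of `n`. -/
theorem hPoly_gamma_positive (n : ℕ) (hn : 0 < n) (σ : List ℕ)
    (hpos : ∀ r ∈ σ, 0 < r) (hsum : σ.sum = n) :
    ∃ γ : ℕ → ℕ,
      (∑ i ∈ Finset.range (n + 1), Polynomial.C (hVec n σ i) * X ^ i : Polynomial ℕ) =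
        ∑ i ∈ Finset.range (n / 2 + 1),
          Polynomial.C (γ i) * X ^ i * (1 + X) ^ (n - 2 * i) := by
  classical
  refine ⟨fun i => ((univ : Finset (Finset (Fin n) × Finset (Fin n))).filter
      (fun q => (Disjoint q.1 q.2 ∧ Good n σ q.1 q.2) ∧ q.1.card = i)).card, ?_⟩
  have hL : (∑ i ∈ Finset.range (n + 1), Polynomial.C (hVec n σ i) * X ^ i : Polynomial ℕ) =
      ∑ p ∈ (univ : Finset (Finset (Fin n) × Finset (Fin n))).filter
        (fun p => Good n σ p.1 p.2), (X : Polynomial ℕ) ^ p.1.card := by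
    rw [← sum_fiberwise_of_maps_to (t := Finset.range (n + 1)) (g := fun p : Finset (Fin n) × Finset (Fin n) => p.1.card)]
    · refine sum_congr rfl fun i _ => ?_
      rw [hVec_eq n hn σ hsum, filter_filter, sum_congr rfl (g := fun _ => (X : Polynomial ℕ) ^ i)]
      · simp
      · intro p hp
        rw [(mem_filter.1 hp).2.2]
    · intro p _
      have := card_le_univ p.1
      rw [Fintype.card_fin] at this
      rw [mem_range]
      omega
  rw [hL, sum_good,
    ← sum_fiberwise_of_maps_to (t := Finset.range (n / 2 + 1)) (g := fun p : Finset (Fin n) × Finset (Fin n) => p.1.card)]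
  · refine sum_congr rfl fun i _ => ?_
    rw [filter_filter, sum_congr rfl
      (g := fun _ => (X : Polynomial ℕ) ^ i * (1 + X) ^ (n - 2 * i))]
    · simp [mul_assoc]
    · intro p hp
      rw [(mem_filter.1 hp).2.2]
  · intro p hp
    simp only [mem_filter, mem_univ, true_and] at hp
    have := card_le_univ (p.1 ∪ p.2)
    rw [Fintype.card_fin, card_union_of_disjoint hp.1, ← hp.2.1] at this
    rw [mem_range]
    omega
end

section
/- For every composition σ = (r_1,...,r_k) of a positive integer n, the vector (h_0(σ), h_1(σ), ..., h_n(σ)) is palindromic: h_i(σ) = h_{n-i}(σ) for all 0 ≤ i ≤ n. -/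
open Finset Polynomial

/-- One-coordinate operator, in the variable `w = z - 1`. -/
noncomputable def opK (t : ℚ) (p : ℚ[X]) : ℚ[X] := p + C t * divX p

/-- Block state. -/
noncomputable def stP (t : ℚ) (σ : List ℕ) : ℚ[X] :=
  σ.foldl (fun p r => (opK t)^[r] ((1 + X) ^ r * p)) 1

theorem stP_append (t : ℚ) (σ : List ℕ) (r : ℕ) :
    stP t (σ ++ [r]) = (opK t)^[r] ((1 + X) ^ r * stP t σ) := by
  simp [stP, List.foldl_append]

theorem opK_eq (t : ℚ) (p : ℚ[X]) : opK t p = divX ((X + C t) * p) := by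
  ext k
  simp [opK, coeff_divX, add_mul, coeff_X_mul]

theorem opK_divX (t : ℚ) (p : ℚ[X]) : opK t (divX p) = divX (opK t p) := by
  ext k
  simp [opK, coeff_divX]

theorem opK_iter_divX (t : ℚ) (r : ℕ) (p : ℚ[X]) :
    (opK t)^[r] (divX p) = divX ((opK t)^[r] p) := by
  induction r generalizing p with
  | zero => rfl
  | succ r ih => simp only [Function.iterate_succ_apply, opK_divX, ih]

theorem opK_iter (t : ℚ) (r : ℕ) (p : ℚ[X]) :
    (opK t)^[r] p = divX^[r] ((X + C t) ^ r * p) := by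
  induction r generalizing p with
  | zero => simp
  | succ r ih =>
    rw [Function.iterate_succ_apply, opK_eq, opK_iter_divX, ih,
      Function.iterate_succ_apply', pow_succ, mul_assoc]

theorem divX_iter_C_mul (a : ℚ) (r : ℕ) (p : ℚ[X]) :
    divX^[r] (C a * p) = C a * divX^[r] p := by
  induction r generalizing p with
  | zero => rfl
  | succ r ih => simp only [Function.iterate_succ_apply, divX_C_mul, ih]

theorem divX_iter_sc (t : ℚ) (r : ℕ) (p : ℚ[X]) :
    divX^[r] (p.comp (C t * X)) = C (t ^ r) * (divX^[r] p).comp (C t * X) := by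
  induction r generalizing p with
  | zero => simp
  | succ r ih =>
    have h : divX (p.comp (C t * X)) = C t * (divX p).comp (C t * X) := by
      ext k
      simp only [coeff_divX, comp_C_mul_X_coeff, coeff_C_mul]
      ring
    rw [Function.iterate_succ_apply, h, divX_iter_C_mul, ih, Function.iterate_succ_apply,
      pow_succ, C_mul]
    ring

theorem stP_symm (t : ℚ) (ht : t ≠ 0) (σ : List ℕ) :
    C (t ^ σ.sum) * stP t⁻¹ σ = (stP t σ).comp (C t * X) := by
  induction σ using List.reverseRecOn with
  | nil => simp [stP]
  | append_singleton σ r ih =>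
    have hC : (C (t ^ r) : ℚ[X]) ≠ 0 := by simpa using pow_ne_zero r ht
    apply mul_left_cancel₀ hC
    rw [stP_append, stP_append, opK_iter, opK_iter, ← divX_iter_sc, ← divX_iter_C_mul,
      ← divX_iter_C_mul]
    congr 1
    have h1 : (C t : ℚ[X]) * C t⁻¹ = 1 := by rw [← C_mul, mul_inv_cancel₀ ht, C_1]
    simp only [mul_comp, pow_comp, add_comp, X_comp, C_comp, one_comp, ← ih,
      List.sum_append, List.sum_singleton, pow_add, C_mul]
    have h2 : (1 + C t * X : ℚ[X]) = C t * (X + C t⁻¹) := by rw [mul_add, h1]; ring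
    have h3 : (C t * X + C t : ℚ[X]) = C t * (1 + X) := by ring
    rw [h2, h3]
    simp only [mul_pow, C_pow]
    ring

open Classical in
/-- Points with the constraints of `σ` and total at most `N`. -/
noncomputable def ptS (m N : ℕ) (σ : List ℕ) : Finset (Fin m → ℕ) :=
  (Fintype.piFinset fun _ => Finset.range (N + 1)).filter
    (fun a => memP m σ a ∧ ∑ j, a j ≤ N)

theorem mem_ptS (m N : ℕ) (σ : List ℕ) (a : Fin m → ℕ) :
    a ∈ ptS m N σ ↔ memP m σ a ∧ ∑ j, a j ≤ N := by
  simp only [ptS, Finset.mem_filter, Fintype.mem_piFinset, Finset.mem_range,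
    and_iff_right_iff_imp]
  rintro ⟨_, h⟩ j
  have := Finset.single_le_sum (f := a) (fun _ _ => Nat.zero_le _) (Finset.mem_univ j)
  omega

/-- Generating function of the slack. -/
noncomputable def gfF (t : ℚ) (m N : ℕ) (σ : List ℕ) : ℚ[X] :=
  ∑ a ∈ ptS m N σ, C (t ^ nonzeroCount a) * (1 + X) ^ (N - ∑ j, a j)

theorem pSum_le (σ : List ℕ) (i : ℕ) : pSum σ i ≤ σ.sum := by
  unfold pSum
  conv_rhs => rw [← List.take_append_drop i σ, List.sum_append]
  omega

theorem memP_snoc (m : ℕ) (σ : List ℕ) (h : σ.sum ≤ m) (a : Fin m → ℕ) (x : ℕ) :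
    memP (m + 1) σ (Fin.snoc a x) ↔ memP m σ a := by
  unfold memP
  refine forall_congr' fun i => forall_congr' fun _ => forall_congr' fun _ => ?_
  have := pSum_le σ i
  simp only [Finset.sum_filter, Fin.sum_univ_castSucc, Fin.snoc_castSucc, Fin.snoc_last,
    Fin.val_castSucc, Fin.val_last]
  rw [if_neg (by omega), add_zero]

theorem nonzeroCount_snoc (m : ℕ) (a : Fin m → ℕ) (x : ℕ) :
    nonzeroCount (Fin.snoc a x : Fin (m + 1) → ℕ) = nonzeroCount a + if x = 0 then 0 else 1 := by
  simp only [nonzeroCount, Finset.card_filter, Fin.sum_univ_castSucc, Fin.snoc_castSucc,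
    Fin.snoc_last]
  split_ifs <;> simp_all

theorem divX_one_add_pow (B : ℕ) :
    divX ((1 + X : ℚ[X]) ^ B) = ∑ j ∈ Finset.range B, (1 + X) ^ j := by
  have h := mul_geom_sum (1 + X : ℚ[X]) B
  have h2 : (1 + X : ℚ[X]) ^ B = X * (∑ j ∈ Finset.range B, (1 + X) ^ j) + C 1 := by
    have : (1 + X - 1 : ℚ[X]) = X := by ring
    rw [this] at h
    rw [h]; simp
  rw [h2]
  ext k
  simp [coeff_divX, coeff_X_mul, coeff_one]

theorem opK_sum {ι : Type*} (t : ℚ) (s : Finset ι) (f : ι → ℚ[X]) :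
    opK t (∑ i ∈ s, f i) = ∑ i ∈ s, opK t (f i) := by
  ext k
  simp [opK, coeff_divX, finsetSum_coeff, Finset.sum_add_distrib, Finset.mul_sum]

theorem gfF_succ (t : ℚ) (m N : ℕ) (σ : List ℕ) (h : σ.sum ≤ m) :
    gfF t (m + 1) N σ = opK t (gfF t m N σ) := by
  have key : gfF t (m + 1) N σ = ∑ a ∈ ptS m N σ, ∑ x ∈ Finset.range (N - ∑ j, a j + 1),
      C (t ^ (nonzeroCount a + if x = 0 then 0 else 1)) * (1 + X) ^ (N - ∑ j, a j - x) := by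
    rw [Finset.sum_sigma', gfF]
    symm
    refine Finset.sum_bij' (fun p _ => (Fin.snoc p.1 p.2 : Fin (m + 1) → ℕ))
      (fun b _ => ⟨Fin.init b, b (Fin.last m)⟩) ?_ ?_ ?_ ?_ ?_
    · rintro ⟨a, x⟩ hp
      simp only [Finset.mem_sigma, mem_ptS, Finset.mem_range] at hp
      simp only [mem_ptS, memP_snoc m σ h, Fin.sum_univ_castSucc, Fin.snoc_castSucc,
        Fin.snoc_last]
      exact ⟨hp.1.1, by omega⟩
    · intro b hb
      rw [← Fin.snoc_init_self b] at hb
      simp only [mem_ptS, memP_snoc m σ h, Fin.sum_univ_castSucc, Fin.snoc_castSucc,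
        Fin.snoc_last] at hb
      simp only [Finset.mem_sigma, mem_ptS, Finset.mem_range]
      exact ⟨⟨hb.1, by omega⟩, by omega⟩
    · rintro ⟨a, x⟩ _
      simp
    · intro b _
      simp
    · rintro ⟨a, x⟩ _
      simp only [nonzeroCount_snoc, Fin.sum_univ_castSucc, Fin.snoc_castSucc,
        Fin.snoc_last, Nat.sub_sub]
  rw [key, gfF, opK_sum]
  refine Finset.sum_congr rfl fun a _ => ?_
  generalize N - ∑ j, a j = B
  rw [Finset.sum_range_succ', opK, divX_C_mul, divX_one_add_pow, ← Finset.sum_range_reflect,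
    Finset.mul_sum, Finset.mul_sum, add_comm]
  congr 1
  refine Finset.sum_congr rfl fun x hx => ?_
  have hx' := Finset.mem_range.mp hx
  have : B - (B - 1 - x + 1) = x := by omega
  simp [this, pow_succ]
  ring

theorem gfF_iter (t : ℚ) (m N r : ℕ) (σ : List ℕ) (h : σ.sum ≤ m) :
    gfF t (m + r) N σ = (opK t)^[r] (gfF t m N σ) := by
  induction r with
  | zero => rfl
  | succ r ih =>
    rw [Function.iterate_succ_apply', ← ih, ← gfF_succ t (m + r) N σ (by omega)]
    rfl

theorem memP_sum_le (σ : List ℕ) (a : Fin σ.sum → ℕ) (h : memP σ.sum σ a) :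
    ∑ j, a j ≤ σ.sum := by
  rcases Nat.eq_zero_or_pos σ.length with h0 | h0
  · have : σ = [] := List.length_eq_zero_iff.mp h0
    subst this
    exact (Finset.sum_eq_zero fun j _ => absurd j.2 (by simp)).le
  · have := h σ.length h0 le_rfl
    have hp : pSum σ σ.length = σ.sum := by simp [pSum]
    rw [hp, Finset.filter_true_of_mem (fun j _ => j.2)] at this
    exact this

theorem memP_append (σ : List ℕ) (r : ℕ) (a : Fin (σ.sum + r) → ℕ) :
    memP (σ.sum + r) (σ ++ [r]) a ↔ memP (σ.sum + r) σ a ∧ ∑ j, a j ≤ σ.sum + r := by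
  have hp : pSum (σ ++ [r]) (σ.length + 1) = σ.sum + r := by simp [pSum]
  have hq : ∀ i ≤ σ.length, pSum (σ ++ [r]) i = pSum σ i := by
    intro i hi
    simp [pSum, List.take_append_of_le_length hi]
  constructor
  · intro h
    refine ⟨fun i h1 h2 => ?_, ?_⟩
    · have := h i h1 (by simp; omega)
      rwa [hq i h2] at this
    · have := h (σ.length + 1) (by omega) (by simp)
      rwa [hp, Finset.filter_true_of_mem (fun j _ => j.2)] at this
  · rintro ⟨h, h'⟩ i h1 h2
    simp only [List.length_append, List.length_singleton] at h2
    rcases Nat.lt_or_ge σ.length i with h3 | h3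
    · have : i = σ.length + 1 := by omega
      subst this
      rwa [hp, Finset.filter_true_of_mem (fun j _ => j.2)]
    · rw [hq i h3]
      exact h i h1 h3

theorem gfF_eq (t : ℚ) (σ : List ℕ) : gfF t σ.sum σ.sum σ = stP t σ := by
  induction σ using List.reverseRecOn with
  | nil =>
    have h1 : ptS 0 0 [] = {Fin.elim0} := by
      ext a
      have ha : a = Fin.elim0 := funext fun j => j.elim0
      subst ha
      simp [mem_ptS, memP]
    have h2 : nonzeroCount (Fin.elim0 : Fin 0 → ℕ) = 0 := by
      simp [nonzeroCount, Finset.univ_eq_empty]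
    change gfF t 0 0 [] = _
    rw [gfF, h1, Finset.sum_singleton, h2]
    simp [stP]
  | append_singleton σ r ih =>
    have hs : (σ ++ [r]).sum = σ.sum + r := by simp
    rw [stP_append, ← ih, hs]
    have h1 : (1 + X) ^ r * gfF t σ.sum σ.sum σ = gfF t σ.sum (σ.sum + r) σ := by
      have hset : ptS σ.sum (σ.sum + r) σ = ptS σ.sum σ.sum σ := by
        ext a
        simp only [mem_ptS]
        constructor
        · rintro ⟨h, _⟩
          exact ⟨h, memP_sum_le σ a h⟩
        · rintro ⟨h, h'⟩
          exact ⟨h, by omega⟩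
      rw [gfF, gfF, hset, Finset.mul_sum]
      refine Finset.sum_congr rfl fun a ha => ?_
      rw [mem_ptS] at ha
      have : σ.sum + r - ∑ j, a j = r + (σ.sum - ∑ j, a j) := by omega
      rw [this, pow_add]
      ring
    rw [h1, ← gfF_iter _ _ _ _ _ le_rfl, gfF, gfF]
    have hset : ptS (σ.sum + r) (σ.sum + r) (σ ++ [r]) = ptS (σ.sum + r) (σ.sum + r) σ := by
      ext a
      simp only [mem_ptS, memP_append]
      tauto
    rw [hset]

/-- The h-polynomial. -/
noncomputable def hPol (n : ℕ) (σ : List ℕ) : ℚ[X] := ∑ a ∈ ptS n n σ, X ^ nonzeroCount a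

theorem hPol_coeff (σ : List ℕ) (i : ℕ) :
    (hPol σ.sum σ).coeff i = hVec σ.sum σ i := by
  have : {a : Fin σ.sum → ℕ | memP σ.sum σ a ∧ nonzeroCount a = i}
      = ((ptS σ.sum σ.sum σ).filter (fun a => nonzeroCount a = i) : Finset _) := by
    ext a
    simp only [Set.mem_setOf_eq, Finset.coe_filter, mem_ptS]
    constructor
    · rintro ⟨h, h'⟩
      exact ⟨⟨h, memP_sum_le σ a h⟩, h'⟩
    · rintro ⟨⟨h, _⟩, h'⟩
      exact ⟨h, h'⟩
  rw [hVec, this, Set.ncard_coe_finset, hPol, finsetSum_coeff, Finset.card_filter]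
  push_cast
  refine Finset.sum_congr rfl fun a _ => ?_
  simp only [coeff_X_pow, eq_comm]

theorem hPol_eval (t : ℚ) (σ : List ℕ) :
    (hPol σ.sum σ).eval t = (stP t σ).coeff 0 := by
  rw [← gfF_eq, hPol, gfF, eval_finsetSum, finsetSum_coeff]
  refine Finset.sum_congr rfl fun a _ => ?_
  simp [coeff_zero_eq_eval_zero]

theorem hPol_symm (t : ℚ) (ht : t ≠ 0) (σ : List ℕ) :
    t ^ σ.sum * (hPol σ.sum σ).eval t⁻¹ = (hPol σ.sum σ).eval t := by
  rw [hPol_eval, hPol_eval]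
  have := congrArg (fun p => coeff p 0) (stP_symm t ht σ)
  simpa only [coeff_C_mul, comp_C_mul_X_coeff, pow_zero, mul_one] using this

theorem nonzeroCount_le {n : ℕ} (a : Fin n → ℕ) : nonzeroCount a ≤ n := by
  simpa [nonzeroCount] using Finset.card_filter_le (Finset.univ : Finset (Fin n)) (fun j => a j ≠ 0)

theorem hPol_reflect (σ : List ℕ) : reflect σ.sum (hPol σ.sum σ) = hPol σ.sum σ := by
  have hX : (X : ℚ[X]) ≠ 0 := X_ne_zero
  apply mul_left_cancel₀ hX
  apply Polynomial.funext
  intro t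
  by_cases ht : t = 0
  · simp [ht]
  rw [eval_mul, eval_mul]
  congr 1
  rw [← hPol_symm t ht σ]
  have hd : (hPol σ.sum σ).natDegree ≤ σ.sum := by
    refine natDegree_sum_le_of_forall_le _ _ fun a _ => ?_
    rw [natDegree_X_pow]
    exact nonzeroCount_le a
  have hu : Invertible t⁻¹ := invertibleOfNonzero (inv_ne_zero ht)
  have := eval₂_reflect_mul_pow (RingHom.id ℚ) t⁻¹ σ.sum (hPol σ.sum σ) hd
  simp only [invOf_eq_inv, inv_inv] at this
  change (eval t _) * _ = eval t⁻¹ _ at this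
  rw [← this, mul_comm, mul_assoc, ← mul_pow, inv_mul_cancel₀ ht, one_pow, mul_one]

/-- The vector `(h_0(σ), …, h_n(σ))` is palindromic. -/
theorem hVec_palindromic (n : ℕ) (hn : 0 < n) (σ : List ℕ)
    (hpos : ∀ r ∈ σ, 0 < r) (hsum : σ.sum = n) :
    ∀ i ≤ n, hVec n σ i = hVec n σ (n - i) := by
  subst hsum
  intro i hi
  have h : ((hVec σ.sum σ i : ℕ) : ℚ) = (hVec σ.sum σ (σ.sum - i) : ℕ) := by
    rw [← hPol_coeff, ← hPol_coeff]
    conv_lhs => rw [← hPol_reflect]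
    rw [coeff_reflect, revAt_le hi]
  exact_mod_cast h
end

section
/- Let σ = (r_1,...,r_k) be a composition of a positive integer n and let rev(σ) = (r_k,...,r_1) be its reversal. For every m ∈ ℕ, the number of points (a_1,...,a_n) ∈ ℕ^n satisfying a_1 + a_2 + ... + a_{s_i} ≤ m·s_i for all i ∈ {1,...,k} is equal to the number of multichains p_1 ≼ p_2 ≼ ... ≼ p_m of length m in the poset P_{rev(σ)} (equivalently, Ehr(Q_σ, m) = Z(P_{rev(σ)}, m+1)). -/
open Finset Polynomial

/-- The number of lattice points of the `m`-th dilate of the composition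
polytope `Q_σ`, i.e. the Ehrhart polynomial of `Q_σ` evaluated at `m`. -/
noncomputable def ehrCount (n : ℕ) (σ : List ℕ) (m : ℕ) : ℕ :=
  {a : Fin n → ℕ | ∀ i, 1 ≤ i → i ≤ σ.length →
    (∑ j ∈ Finset.univ.filter (fun j : Fin n => (j : ℕ) < pSum σ i), a j)
      ≤ m * pSum σ i}.ncard

/-- The number of `m`-multichains in the poset `P_σ` (coordinatewise order). -/
noncomputable def multichainCount (n : ℕ) (σ : List ℕ) (m : ℕ) : ℕ :=
  {p : Fin m → Fin n → ℕ |
    (∀ t, memP n σ (p t)) ∧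
    ∀ t t' : Fin m, t ≤ t' → ∀ j, p t j ≤ p t' j}.ncard

/-- Partial sum of the first `x` coordinates. -/
def ps {n : ℕ} (a : Fin n → ℕ) (x : ℕ) : ℕ :=
  ∑ j ∈ Finset.univ.filter (fun j : Fin n => (j : ℕ) < x), a j

/-- Shifted extension of `A` by `0`. -/
def pre {n : ℕ} (A : Fin n → ℕ) : ℕ → ℕ
  | 0 => 0
  | x + 1 => if h : x < n then A ⟨x, h⟩ else 0

lemma ps_zero {n : ℕ} (a : Fin n → ℕ) : ps a 0 = 0 := by simp [ps]

lemma ps_succ {n : ℕ} (a : Fin n → ℕ) (x : ℕ) (h : x < n) :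
    ps a (x + 1) = ps a x + a ⟨x, h⟩ := by
  unfold ps
  have : (Finset.univ.filter (fun j : Fin n => (j : ℕ) < x + 1))
      = insert ⟨x, h⟩ (Finset.univ.filter (fun j : Fin n => (j : ℕ) < x)) := by
    ext j
    simp only [Finset.mem_filter, Finset.mem_univ, true_and, Finset.mem_insert, Fin.ext_iff]
    omega
  rw [this, Finset.sum_insert (by simp), add_comm]

lemma ps_mono {n : ℕ} (a : Fin n → ℕ) {x y : ℕ} (h : x ≤ y) : ps a x ≤ ps a y := by
  unfold ps
  apply Finset.sum_le_sum_of_subset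
  intro j
  simp only [Finset.mem_filter, Finset.mem_univ, true_and]
  omega

lemma ps_le {n : ℕ} {a b : Fin n → ℕ} (h : ∀ j, a j ≤ b j) (x : ℕ) : ps a x ≤ ps b x :=
  Finset.sum_le_sum fun j _ => h j

lemma pre_succ {n : ℕ} (A : Fin n → ℕ) (x : ℕ) (h : x < n) : pre A (x + 1) = A ⟨x, h⟩ := by
  simp [pre, h]

lemma pre_mono {n : ℕ} {A : Fin n → ℕ} (hA : Monotone A) {x y : ℕ} (h : x ≤ y) (hy : y ≤ n) :
    pre A x ≤ pre A y := by
  rcases x with _ | x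
  · simp [pre]
  · rcases y with _ | y
    · omega
    · rw [pre_succ A x (by omega), pre_succ A y (by omega)]
      exact hA (by simp only [Fin.mk_le_mk]; omega)

lemma ncard_eq_of_inv {α β : Type*} {s : Set α} {t : Set β} (f : α → β) (g : β → α)
    (hf : ∀ x ∈ s, f x ∈ t) (hg : ∀ y ∈ t, g y ∈ s)
    (hgf : ∀ x ∈ s, g (f x) = x) (hfg : ∀ y ∈ t, f (g y) = y) : s.ncard = t.ncard := by
  refine Set.ncard_congr (fun x _ => f x) hf ?_ ?_
  · intro x y hx hy h
    rw [← hgf x hx, ← hgf y hy]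
    exact congrArg g h
  · intro y hy
    exact ⟨g y, hg y hy, hfg y hy⟩

/-- Step 1: partial sums. -/
lemma step_one (n m : ℕ) (S : Set ℕ) (hS : ∀ s ∈ S, s ≤ n) :
    {a : Fin n → ℕ | ∀ s ∈ S, ps a s ≤ m * s}.ncard =
    {A : Fin n → ℕ | Monotone A ∧ ∀ s ∈ S, ∀ j : Fin n, (j : ℕ) < s → A j ≤ m * s}.ncard := by
  have key : ∀ A : Fin n → ℕ, Monotone A → ∀ x ≤ n,
      ps (fun j : Fin n => A j - pre A j) x = pre A x := by
    intro A hA x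
    induction x with
    | zero => intro _; simp [ps_zero, pre]
    | succ x ih =>
      intro hx
      rw [ps_succ _ x (by omega), ih (by omega), ← pre_succ A x (by omega)]
      have := pre_mono hA (Nat.le_succ x) hx
      simp only [Nat.succ_eq_add_one] at this ⊢
      omega
  refine ncard_eq_of_inv (fun a j => ps a (j + 1)) (fun A j => A j - pre A j) ?_ ?_ ?_ ?_
  · intro a ha
    refine ⟨?_, ?_⟩
    · intro i j hij
      exact ps_mono a (by simpa using hij)
    · intro s hs j hj
      exact (ps_mono a hj).trans (ha s hs)
  · rintro A ⟨hA, hc⟩ s hs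
    rw [key A hA s (hS s hs)]
    rcases s with _ | s
    · simp [pre]
    · have := hS _ hs
      rw [pre_succ A s (by omega)]
      exact hc _ hs _ (by simp)
  · intro a ha
    funext j
    have h1 : pre (fun j : Fin n => ps a (j + 1)) j = ps a j := by
      rcases j with ⟨_ | j, hj⟩
      · simp [pre, ps_zero]
      · simp only
        rw [pre_succ _ j (by omega)]
    simp only [h1]
    rw [ps_succ a j j.2]
    simp
  · rintro A ⟨hA, hc⟩
    funext j
    rw [key A hA (j + 1) j.2, pre_succ A j j.2]

/-- Reversed conjugate. -/
def conjRev (n N : ℕ) (A : Fin n → ℕ) (w : Fin N) : ℕ :=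
  (Finset.univ.filter (fun j : Fin n => N ≤ A j + w)).card

lemma card_ge (n c : ℕ) (hc : c ≤ n) :
    (Finset.univ.filter (fun j : Fin n => n ≤ c + j)).card = c := by
  have h := Fin.card_filter_val_lt (n := n) (m := n - c)
  have h2 := Finset.card_filter_add_card_filter_not (s := (Finset.univ : Finset (Fin n)))
    (fun j : Fin n => (j : ℕ) < n - c)
  have h3 : (Finset.univ.filter (fun j : Fin n => n ≤ c + j)) =
    Finset.univ.filter (fun j : Fin n => ¬ (j : ℕ) < n - c) := by
    ext j
    simp only [Finset.mem_filter, Finset.mem_univ, true_and]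
    omega
  rw [h3]
  simp only [Finset.card_univ, Fintype.card_fin] at h2
  omega

lemma conj_le (n N : ℕ) (A : Fin n → ℕ) (w : Fin N) : conjRev n N A w ≤ n := by
  unfold conjRev
  refine (Finset.card_le_univ _).trans (by simp)

lemma conj_iff (n N : ℕ) (A : Fin n → ℕ) (hA : Monotone A) (w : Fin N) (j : Fin n) :
    n ≤ conjRev n N A w + j ↔ N ≤ A j + w := by
  constructor
  · intro h
    by_contra hc
    have : (Finset.univ.filter (fun i : Fin n => N ≤ A i + w)) ⊆
        Finset.univ.filter (fun i : Fin n => n ≤ (n - 1 - j) + i) := by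
      intro i
      simp only [Finset.mem_filter, Finset.mem_univ, true_and]
      intro hi
      by_contra h2
      have : A i ≤ A j := hA (by rw [Fin.le_def]; omega)
      omega
    have h3 := Finset.card_le_card this
    rw [card_ge n _ (by omega)] at h3
    have := j.2
    unfold conjRev at h
    omega
  · intro h
    have : Finset.univ.filter (fun i : Fin n => n ≤ (n - j) + i) ⊆
        (Finset.univ.filter (fun i : Fin n => N ≤ A i + w)) := by
      intro i
      simp only [Finset.mem_filter, Finset.mem_univ, true_and]
      intro hi
      have : A j ≤ A i := hA (by rw [Fin.le_def]; omega)
      omega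
    have h3 := Finset.card_le_card this
    rw [card_ge n _ (by omega)] at h3
    unfold conjRev
    omega

lemma conj_mono (n N : ℕ) (A : Fin n → ℕ) : Monotone (conjRev n N A) := by
  intro v w h
  apply Finset.card_le_card
  intro i
  simp only [Finset.mem_filter, Finset.mem_univ, true_and]
  rw [Fin.le_def] at h
  omega

lemma conj_conj (n N : ℕ) (A : Fin n → ℕ) (hA : Monotone A) (hN : ∀ j, A j ≤ N) :
    conjRev N n (conjRev n N A) = A := by
  funext j
  have : conjRev N n (conjRev n N A) j =
      (Finset.univ.filter (fun w : Fin N => N ≤ A j + w)).card := by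
    conv_lhs => unfold conjRev
    congr 1
    ext w
    simp only [Finset.mem_filter, Finset.mem_univ, true_and]
    exact conj_iff n N A hA w j
  rw [this, card_ge _ _ (hN j)]

/-- Step 2: conjugation. -/
lemma step_two (n m : ℕ) (S : Set ℕ) (hS : ∀ s ∈ S, s ≤ n) (hn : n ∈ S) (h0 : 0 ∈ S) :
    {A : Fin n → ℕ | Monotone A ∧ ∀ s ∈ S, ∀ j : Fin n, (j : ℕ) < s → A j ≤ m * s}.ncard =
    {B : Fin (n * m) → ℕ | Monotone B ∧ ∀ s ∈ S, ∀ w : Fin (n * m), (w : ℕ) < (n - s) * m →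
      B w ≤ n - s}.ncard := by
  have hmul : ∀ s ∈ S, (n - s) * m + m * s = n * m := by
    intro s hs
    rw [mul_comm m s, ← add_mul, Nat.sub_add_cancel (hS s hs)]
  refine ncard_eq_of_inv (conjRev n (n * m)) (conjRev (n * m) n) ?_ ?_ ?_ ?_
  · rintro A ⟨hA, hc⟩
    refine ⟨conj_mono _ _ _, ?_⟩
    intro s hs w hw
    by_contra hlt
    have h1 := conj_le n (n * m) A w
    have h2 := hmul s hs
    have h3 := hS s hs
    have hs0 : 0 < s := by omega
    have h4 := (conj_iff n (n * m) A hA w ⟨s - 1, by omega⟩).1 (by simp only; omega)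
    have h5 := hc s hs ⟨s - 1, by omega⟩ (by simp only; omega)
    omega
  · rintro B ⟨hB, hc⟩
    refine ⟨conj_mono _ _ _, ?_⟩
    intro s hs j hj
    by_contra hlt
    have h1 := conj_le (n * m) n B j
    have h2 := hmul s hs
    have h3 := hS s hs
    have h4 := (conj_iff (n * m) n B hB j ⟨n * m - m * s - 1, by omega⟩).1 (by simp only; omega)
    have h5 := hc s hs ⟨n * m - m * s - 1, by omega⟩ (by simp only; omega)
    omega
  · rintro A ⟨hA, hc⟩
    refine conj_conj _ _ _ hA fun j => ?_
    rw [mul_comm]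
    exact hc n hn j j.2
  · rintro B ⟨hB, hc⟩
    refine conj_conj _ _ _ hB fun w => ?_
    simpa using hc 0 h0 w (by simp)

lemma idx_lt {n m j t : ℕ} (hj : j < n) (ht : t < m) : j * m + t < n * m := by
  have : (j + 1) * m ≤ n * m := Nat.mul_le_mul_right m hj
  rw [add_mul] at this
  omega

/-- Step 3: multichains. -/
lemma step_three (n m : ℕ) (T : Set ℕ) (hT : ∀ s ∈ T, s ≤ n) :
    {p : Fin m → Fin n → ℕ | (∀ t, ∀ s ∈ T, ps (p t) s ≤ s) ∧
      ∀ t t' : Fin m, t ≤ t' → ∀ j, p t j ≤ p t' j}.ncard =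
    {B : Fin (n * m) → ℕ | Monotone B ∧ ∀ s ∈ T, ∀ w : Fin (n * m), (w : ℕ) < s * m →
      B w ≤ s}.ncard := by
  rcases Nat.eq_zero_or_pos m with rfl | hm
  · refine ncard_eq_of_inv (fun _ _ => 0) (fun _ _ _ => 0) ?_ ?_ ?_ ?_
    · intro p _
      exact ⟨fun _ _ _ => le_rfl, fun _ _ _ _ => Nat.zero_le _⟩
    · intro B _
      exact ⟨fun t => t.elim0, fun t => t.elim0⟩
    · intro p _
      funext t
      exact t.elim0
    · intro B _
      funext w
      exact (Fin.cast (Nat.mul_zero n) w).elim0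
  let L : Fin m := ⟨m - 1, by omega⟩
  have hL : ∀ t : Fin m, t ≤ L := fun t => by rw [Fin.le_def]; simp only [L]; omega
  let f : (Fin m → Fin n → ℕ) → Fin (n * m) → ℕ := fun p w =>
    ps (p L) (w / m) + p ⟨w % m, Nat.mod_lt _ hm⟩
      ⟨w / m, Nat.div_lt_of_lt_mul (by rw [mul_comm m n]; exact w.2)⟩
  let g : (Fin (n * m) → ℕ) → Fin m → Fin n → ℕ := fun B t j =>
    B ⟨j * m + t, idx_lt j.2 t.2⟩ - pre B (j * m)
  have hBpre : ∀ B : Fin (n * m) → ℕ, Monotone B → ∀ (t : Fin m) (j : Fin n),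
      pre B (j * m) ≤ B ⟨j * m + t, idx_lt j.2 t.2⟩ := by
    intro B hB t j
    rw [← pre_succ B _ (idx_lt j.2 t.2)]
    exact pre_mono hB (by omega) (idx_lt j.2 t.2)
  have key : ∀ B : Fin (n * m) → ℕ, Monotone B → ∀ x ≤ n, ps (g B L) x = pre B (x * m) := by
    intro B hB x
    induction x with
    | zero => intro _; simp [ps_zero, pre]
    | succ x ih =>
      intro hx
      rw [ps_succ _ x (by omega), ih (by omega)]
      have h1 := hBpre B hB L ⟨x, by omega⟩
      have h2 := pre_succ B _ (idx_lt (j := x) (n := n) (by omega) L.2)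
      have h3 : x * m + (L : ℕ) + 1 = (x + 1) * m := by
        simp only [L, add_mul]; omega
      rw [h3] at h2
      simp only [g]
      rw [h2]
      simp only at h1
      omega
  have fle : ∀ p : Fin m → Fin n → ℕ, (∀ t t' : Fin m, t ≤ t' → ∀ j, p t j ≤ p t' j) →
      ∀ w : Fin (n * m), f p w ≤ ps (p L) (w / m + 1) := by
    intro p hp w
    rw [ps_succ _ _ (Nat.div_lt_of_lt_mul (by rw [mul_comm m n]; exact w.2))]
    exact Nat.add_le_add_left (hp _ _ (hL _) _) _
  have fidx : ∀ (p : Fin m → Fin n → ℕ) (t : Fin m) (j : Fin n),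
      f p ⟨j * m + t, idx_lt j.2 t.2⟩ = ps (p L) j + p t j := by
    intro p t j
    have h1 : ((j : ℕ) * m + t) / m = j := by
      rw [mul_comm, Nat.mul_add_div hm, Nat.div_eq_of_lt t.2, add_zero]
    have h2 : ((j : ℕ) * m + t) % m = t := by
      rw [mul_comm, Nat.mul_add_mod, Nat.mod_eq_of_lt t.2]
    simp only [f, h1, h2]
  refine ncard_eq_of_inv f g ?_ ?_ ?_ ?_
  · rintro p ⟨hc, hp⟩
    refine ⟨?_, ?_⟩
    · intro v w hvw
      rw [Fin.le_def] at hvw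
      rcases (Nat.div_le_div_right (c := m) hvw).lt_or_eq with h | h
      · exact (fle p hp v).trans ((ps_mono (p L) h).trans (Nat.le_add_right _ _))
      · have e1 := Nat.div_add_mod (v : ℕ) m
        have e2 := Nat.div_add_mod (w : ℕ) m
        rw [h] at e1
        simp only [f, h]
        refine Nat.add_le_add_left (hp _ _ ?_ _) _
        simp only [Fin.mk_le_mk]
        omega
    · intro s hs w hw
      exact (fle p hp w).trans ((ps_mono (p L)
        (Nat.div_lt_of_lt_mul (by rw [mul_comm m s]; exact hw))).trans (hc L s hs))
  · rintro B ⟨hB, hc⟩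
    have hmono : ∀ t t' : Fin m, t ≤ t' → ∀ j, g B t j ≤ g B t' j := by
      intro t t' h j
      refine Nat.sub_le_sub_right (hB ?_) _
      simp only [Fin.mk_le_mk]
      rw [Fin.le_def] at h
      omega
    refine ⟨?_, hmono⟩
    intro t s hs
    refine (ps_le (hmono t L (hL t)) s).trans ?_
    have hsn := hT s hs
    rw [key B hB s hsn]
    rcases s with _ | s
    · simp [pre]
    · have h2 := pre_succ B _ (idx_lt (j := s) (n := n) (by omega) L.2)
      have h3 : s * m + (L : ℕ) + 1 = (s + 1) * m := by
        simp only [L, add_mul]; omega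
      rw [h3] at h2
      rw [h2]
      exact hc _ hs _ (by simp only; omega)
  · rintro p ⟨hc, hp⟩
    funext t j
    have h1 : pre (f p) (j * m) = ps (p L) j := by
      rcases j with ⟨_ | j, hj⟩
      · simp [pre, ps_zero]
      · have h2 := pre_succ (f p) _ (idx_lt (j := j) (n := n) (by omega) L.2)
        have h3 : j * m + (L : ℕ) + 1 = (j + 1) * m := by
          simp only [L, add_mul]; omega
        rw [h3] at h2
        simp only
        rw [h2, fidx p L ⟨j, by omega⟩, ps_succ _ j (by omega)]
    simp only [g, h1, fidx]
    omega
  · rintro B ⟨hB, hc⟩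
    funext w
    have hw : (w : ℕ) / m < n := Nat.div_lt_of_lt_mul (by rw [mul_comm m n]; exact w.2)
    have e1 : (w : ℕ) / m * m + (w : ℕ) % m = w := Nat.div_add_mod' (w : ℕ) m
    have h1 := hBpre B hB ⟨w % m, Nat.mod_lt _ hm⟩ ⟨w / m, hw⟩
    simp only [e1] at h1
    simp only [f]
    rw [key B hB _ hw.le]
    simp only [g, e1]
    exact Nat.add_sub_of_le h1

/-- `Ehr(Q_σ, m) = Z(P_{rev(σ)}, m + 1)` for every composition `σ` and `m ∈ ℕ`. -/
theorem ehrhart_eq_zeta (n : ℕ) (hn : 0 < n) (σ : List ℕ)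
    (hpos : ∀ r ∈ σ, 0 < r) (hsum : σ.sum = n) :
    ∀ m : ℕ, ehrCount n σ m = multichainCount n σ.reverse m := by
  intro m
  let S : Set ℕ := {s | ∃ i ≤ σ.length, s = pSum σ i}
  have hadd : ∀ i, pSum σ i + (σ.drop i).sum = n := by
    intro i
    rw [← hsum]
    exact List.sum_take_add_sum_drop σ i
  have hS : ∀ s ∈ S, s ≤ n := by
    rintro s ⟨i, _, rfl⟩
    have := hadd i
    omega
  have hnS : n ∈ S := ⟨σ.length, le_rfl, by simp [pSum, hsum]⟩
  have h0S : 0 ∈ S := ⟨0, Nat.zero_le _, by simp [pSum]⟩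
  have hrev : ∀ i ≤ σ.length, pSum σ.reverse i = n - pSum σ (σ.length - i) := by
    intro i hi
    have := hadd (σ.length - i)
    have h2 : pSum σ.reverse i = (σ.drop (σ.length - i)).sum := by
      simp only [pSum, List.take_reverse, List.sum_reverse]
    omega
  let T : Set ℕ := {x | ∃ s ∈ S, x = n - s}
  have hT : ∀ x ∈ T, x ≤ n := by
    rintro x ⟨s, _, rfl⟩
    omega
  have hE : ehrCount n σ m = {a : Fin n → ℕ | ∀ s ∈ S, ps a s ≤ m * s}.ncard := by
    unfold ehrCount
    congr 1
    ext a
    simp only [Set.mem_setOf_eq]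
    constructor
    · rintro h s ⟨i, hi, rfl⟩
      rcases Nat.eq_zero_or_pos i with rfl | hi0
      · simp [pSum, ps_zero]
      · exact h i hi0 hi
    · intro h i _ hi
      exact h _ ⟨i, hi, rfl⟩
  have hP : ∀ a : Fin n → ℕ, memP n σ.reverse a ↔ ∀ s ∈ T, ps a s ≤ s := by
    intro a
    constructor
    · rintro h x ⟨s, ⟨i, hi, rfl⟩, rfl⟩
      rcases hi.eq_or_lt with rfl | hi'
      · simp [pSum, hsum, ps_zero]
      · have h2 := h (σ.length - i) (by omega) (by simp)
        rw [hrev _ (by omega), Nat.sub_sub_self hi] at h2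
        exact h2
    · intro h i _ hi
      rw [List.length_reverse] at hi
      rw [hrev i hi]
      exact h _ ⟨_, ⟨σ.length - i, by omega, rfl⟩, rfl⟩
  rw [hE, step_one n m S hS, step_two n m S hS hnS h0S]
  unfold multichainCount
  simp only [hP]
  rw [step_three n m T hT]
  congr 1
  ext B
  simp only [Set.mem_setOf_eq, T]
  constructor
  · rintro ⟨h1, h2⟩
    refine ⟨h1, ?_⟩
    rintro _ ⟨s, hs, rfl⟩
    exact h2 s hs
  · rintro ⟨h1, h2⟩
    exact ⟨h1, fun s hs => h2 _ ⟨s, hs, rfl⟩⟩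
end

section
/- Let σ = (r_1,...,r_k) be a composition of a positive integer n. Let S, T ⊆ {1,...,n} with #S = #T, and let R ⊆ {1,...,n} be disjoint from S ∪ T. Then there exists x ∈ H_σ with S(x) = S and T(x) = T if and only if there exists y ∈ H_σ with S(y) = S ∪ R and T(y) = T ∪ R. -/
open Finset Polynomial

/-- Membership in `H_σ`: the nonzero entries appear in strictly increasing order
from left to right, and `p₁, …, p_{s_i} ≤ s_i` for every `i ∈ [k]`. -/
def memH (n : ℕ) (σ : List ℕ) (p : Fin n → ℕ) : Prop :=
  (∀ j j' : Fin n, j < j' → p j ≠ 0 → p j' ≠ 0 → p j < p j') ∧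
  (∀ i, 1 ≤ i → i ≤ σ.length → ∀ j : Fin n, (j : ℕ) < pSum σ i → p j ≤ pSum σ i)

/-- `S(x)`: the set of (1-indexed) positions of the nonzero entries of `x`. -/
def Spos {n : ℕ} (p : Fin n → ℕ) : Finset ℕ :=
  (Finset.univ.filter (fun j : Fin n => p j ≠ 0)).image (fun j : Fin n => (j : ℕ) + 1)

/-- `T(x)`: the set of nonzero entries of `x`. -/
def Tset {n : ℕ} (p : Fin n → ℕ) : Finset ℕ :=
  (Finset.univ.filter (fun j : Fin n => p j ≠ 0)).image p

theorem exists_strictMono_image (S T : Finset ℕ) (hcard : S.card = T.card) :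
    ∃ e : ℕ → ℕ, (∀ a ∈ S, ∀ b ∈ S, a < b → e a < e b) ∧ S.image e = T := by
  let f : S ≃o T := (S.orderIsoOfFin rfl).symm.trans (T.orderIsoOfFin hcard.symm)
  refine ⟨fun a => if h : a ∈ S then (f ⟨a, h⟩ : ℕ) else 0, ?_, ?_⟩
  · intro a ha b hb hab
    simp only [ha, hb, dif_pos]
    have : f ⟨a, ha⟩ < f ⟨b, hb⟩ := f.lt_iff_lt.mpr hab
    exact this
  · ext t
    simp only [Finset.mem_image]
    constructor
    · rintro ⟨a, ha, rfl⟩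
      simp only [ha, dif_pos]
      exact (f ⟨a, ha⟩).2
    · intro ht
      refine ⟨(f.symm ⟨t, ht⟩ : ℕ), (f.symm ⟨t, ht⟩).2, ?_⟩
      simp

theorem exists_memH_iff_card (n : ℕ) (σ : List ℕ) (S T : Finset ℕ)
    (hS : S ⊆ Finset.Icc 1 n) (hT : T ⊆ Finset.Icc 1 n) (hcard : S.card = T.card) :
    (∃ x : Fin n → ℕ, memH n σ x ∧ Spos x = S ∧ Tset x = T) ↔
      ∀ i, 1 ≤ i → i ≤ σ.length →
        (S.filter (· ≤ pSum σ i)).card ≤ (T.filter (· ≤ pSum σ i)).card := by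
  constructor
  · rintro ⟨x, ⟨hx1, hx2⟩, rfl, rfl⟩ i hi1 hi2
    have h1 : (Spos x).filter (· ≤ pSum σ i) =
        (Finset.univ.filter (fun j : Fin n => x j ≠ 0 ∧ (j : ℕ) < pSum σ i)).image
          (fun j : Fin n => (j : ℕ) + 1) := by
      ext a
      simp only [Spos, Finset.mem_filter, Finset.mem_image, Finset.mem_univ, true_and]
      constructor
      · rintro ⟨⟨j, hj, rfl⟩, h⟩
        exact ⟨j, ⟨hj, h⟩, rfl⟩
      · rintro ⟨j, ⟨hj, h⟩, rfl⟩
        exact ⟨⟨j, hj, rfl⟩, h⟩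
    rw [h1]
    refine Finset.card_image_le.trans ?_
    refine Finset.card_le_card_of_injOn x ?_ ?_
    · intro j hj
      simp only [Finset.coe_filter, Finset.mem_univ, true_and, Set.mem_setOf_eq] at hj
      simp only [Tset, Finset.coe_filter, Set.mem_setOf_eq, Finset.mem_image,
        Finset.mem_filter, Finset.mem_univ, true_and]
      exact ⟨⟨j, hj.1, rfl⟩, hx2 i hi1 hi2 j hj.2⟩
    · intro j hj j' hj' h
      simp only [Finset.coe_filter, Finset.mem_univ, true_and, Set.mem_setOf_eq] at hj hj'
      rcases lt_trichotomy j j' with hl | hl | hl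
      · have := hx1 j j' hl hj.1 hj'.1
        omega
      · exact hl
      · have := hx1 j' j hl hj'.1 hj.1
        omega
  · intro H
    obtain ⟨e, he, hi⟩ := exists_strictMono_image S T hcard
    have hmem : ∀ a ∈ S, e a ∈ T := fun a ha => hi ▸ Finset.mem_image_of_mem e ha
    have hpos : ∀ a ∈ S, e a ≠ 0 := fun a ha => by
      have := Finset.mem_Icc.mp (hT (hmem a ha))
      omega
    have hne : ∀ j : Fin n, (if (j : ℕ) + 1 ∈ S then e (j + 1) else 0) ≠ 0 ↔ (j : ℕ) + 1 ∈ S := by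
      intro j
      by_cases h : (j : ℕ) + 1 ∈ S
      · simp [h, hpos _ h]
      · simp [h]
    have hidx : ∀ a ∈ S, ∃ j : Fin n, (j : ℕ) + 1 = a := by
      intro a ha
      have := Finset.mem_Icc.mp (hS ha)
      exact ⟨⟨a - 1, by omega⟩, by simp; omega⟩
    refine ⟨fun j => if (j : ℕ) + 1 ∈ S then e (j + 1) else 0, ⟨?_, ?_⟩, ?_, ?_⟩
    · intro j j' hjj hj hj'
      have h1 := (hne j).mp hj
      have h2 := (hne j').mp hj'
      simp only [h1, h2, if_true]
      exact he _ h1 _ h2 (by have : (j : ℕ) < j' := hjj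
                             omega)
    · intro i hi1 hi2 j hj
      by_cases h : (j : ℕ) + 1 ∈ S
      · simp only [h, if_true]
        by_contra hlt
        push Not at hlt
        have hsub : T.filter (· ≤ pSum σ i) ⊆
            ((S.filter (· ≤ pSum σ i)).erase ((j : ℕ) + 1)).image e := by
          intro t ht
          rw [Finset.mem_filter] at ht
          obtain ⟨ht, hts⟩ := ht
          rw [← hi] at ht
          obtain ⟨a, ha, rfl⟩ := Finset.mem_image.mp ht
          have haj : a < (j : ℕ) + 1 := by
            rcases lt_trichotomy a ((j : ℕ) + 1) with hl | hl | hl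
            · exact hl
            · subst hl
              omega
            · have := he _ h _ ha hl
              omega
          refine Finset.mem_image_of_mem e ?_
          rw [Finset.mem_erase, Finset.mem_filter]
          exact ⟨by omega, ha, by omega⟩
        have h1 := (Finset.card_le_card hsub).trans Finset.card_image_le
        have h2 : (j : ℕ) + 1 ∈ S.filter (· ≤ pSum σ i) := Finset.mem_filter.mpr ⟨h, hj⟩
        have h3 := Finset.card_erase_lt_of_mem h2
        have h4 := H i hi1 hi2
        omega
      · simp [h]
    · ext a
      simp only [Spos, Finset.mem_filter, Finset.mem_image, Finset.mem_univ, true_and, hne]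
      constructor
      · rintro ⟨j, hj, rfl⟩
        exact hj
      · intro ha
        obtain ⟨j, rfl⟩ := hidx a ha
        exact ⟨j, ha, rfl⟩
    · ext t
      simp only [Tset, Finset.mem_filter, Finset.mem_image, Finset.mem_univ, true_and, hne]
      rw [← hi, Finset.mem_image]
      constructor
      · rintro ⟨j, hj, rfl⟩
        exact ⟨_, hj, by simp [hj]⟩
      · rintro ⟨a, ha, rfl⟩
        obtain ⟨j, rfl⟩ := hidx a ha
        exact ⟨j, ha, by simp [ha]⟩

/-- A pair `(S, T)` is realized by some element of `H_σ` if and only if so is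
`(S ∪ R, T ∪ R)`, for any `R ⊆ [n]` disjoint from `S ∪ T`. -/
theorem exists_memH_union_iff (n : ℕ) (hn : 0 < n) (σ : List ℕ)
    (hpos : ∀ r ∈ σ, 0 < r) (hsum : σ.sum = n)
    (S T R : Finset ℕ) (hS : S ⊆ Finset.Icc 1 n) (hT : T ⊆ Finset.Icc 1 n)
    (hR : R ⊆ Finset.Icc 1 n) (hcard : S.card = T.card)
    (hdisj : Disjoint R (S ∪ T)) :
    (∃ x : Fin n → ℕ, memH n σ x ∧ Spos x = S ∧ Tset x = T) ↔
      (∃ y : Fin n → ℕ, memH n σ y ∧ Spos y = S ∪ R ∧ Tset y = T ∪ R) := by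
  rw [Finset.disjoint_union_right] at hdisj
  obtain ⟨hRS, hRT⟩ := hdisj
  have hc : (S ∪ R).card = (T ∪ R).card := by
    rw [Finset.card_union_of_disjoint hRS.symm, Finset.card_union_of_disjoint hRT.symm, hcard]
  rw [exists_memH_iff_card n σ S T hS hT hcard,
    exists_memH_iff_card n σ (S ∪ R) (T ∪ R) (Finset.union_subset hS hR)
      (Finset.union_subset hT hR) hc]
  refine forall_congr' fun i => forall_congr' fun _ => forall_congr' fun _ => ?_
  rw [Finset.filter_union, Finset.filter_union,
    Finset.card_union_of_disjoint (Finset.disjoint_filter_filter hRS.symm),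
    Finset.card_union_of_disjoint (Finset.disjoint_filter_filter hRT.symm)]
  omega
end

section
/- For every composition σ = (r_1,...,r_k) of a positive integer n and its reversal rev(σ) = (r_k,...,r_1), one has h_i(σ) = h_i(rev(σ)) for all 0 ≤ i ≤ n. -/
open Finset Polynomial

namespace HRev

/-- number of nonzero entries -/
def nz (l : List ℕ) : ℕ := l.countP (fun x => decide (x ≠ 0))

/-- single-coordinate weight series -/
noncomputable def f : PowerSeries ℤ[X] := PowerSeries.mk fun p => if p = 0 then 1 else X

noncomputable def B (d e : ℕ) : ℤ[X] := PowerSeries.coeff d (f ^ e * PowerSeries.mk fun _ => 1)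

noncomputable def H : List ℕ → ℕ → ℕ → ℤ[X]
  | [], d, e => B d e
  | r :: σ, d, e => ∑ p ∈ antidiagonal (d + r), PowerSeries.coeff p.1 (f ^ r) * H σ p.2 e

lemma one_mul_f : f = 1 + PowerSeries.X * (f + PowerSeries.C (X - 1 : ℤ[X])) := by
  ext n : 1
  rcases n with _ | n
  · simp [f]
  · rw [map_add, PowerSeries.coeff_succ_X_mul]
    rcases n with _ | n
    · simp [f, PowerSeries.coeff_one]
    · simp [f, PowerSeries.coeff_one, PowerSeries.coeff_C]

lemma B_zero_right (d : ℕ) : B d 0 = 1 := by simp [B]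

lemma B_zero_left (e : ℕ) : B 0 e = 1 := by
  simp [B, f]

lemma B_rec (d e : ℕ) : B (d+1) (e+1) = B d (e+1) + B (d+1) e + (X - 1) * B d e := by
  unfold B
  set g : PowerSeries ℤ[X] := PowerSeries.mk fun _ => 1
  have : f ^ (e+1) * g = f ^ e * g + PowerSeries.X * (f ^ (e+1) * g)
      + PowerSeries.X * (PowerSeries.C (X - 1 : ℤ[X]) * (f ^ e * g)) := by
    have h := one_mul_f
    calc f ^ (e+1) * g = f ^ e * g * f := by ring
      _ = f ^ e * g * (1 + PowerSeries.X * (f + PowerSeries.C (X - 1 : ℤ[X]))) := by rw [← h]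
      _ = _ := by ring
  have h2 := congrArg (PowerSeries.coeff (d+1)) this
  rw [map_add, map_add, PowerSeries.coeff_succ_X_mul, PowerSeries.coeff_succ_X_mul,
    PowerSeries.coeff_C_mul] at h2
  rw [h2]; ring

lemma B_symm (d e : ℕ) : B d e = B e d := by
  induction d generalizing e with
  | zero => rw [B_zero_left, B_zero_right]
  | succ d ih =>
    induction e with
    | zero => rw [B_zero_left, B_zero_right]
    | succ e ihe => rw [B_rec, B_rec, ihe, ih (e+1), ih e]; ring

lemma B_add (d e r : ℕ) :
    ∑ p ∈ antidiagonal (d + r), PowerSeries.coeff p.1 (f ^ r) * B p.2 e = B (d + r) (e + r) := by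
  unfold B
  rw [← PowerSeries.coeff_mul]
  congr 1; ring

lemma H_append (σ : List ℕ) (r d e : ℕ) :
    H (σ ++ [r]) d e = ∑ p ∈ antidiagonal (e + r), PowerSeries.coeff p.1 (f ^ r) * H σ d p.2 := by
  induction σ generalizing d with
  | nil =>
    simp only [List.nil_append, H]
    rw [B_add, B_symm, ← B_add]
    exact Finset.sum_congr rfl fun p _ => by rw [B_symm]
  | cons s σ ih =>
    simp only [List.cons_append, H, ih, Finset.mul_sum]
    rw [Finset.sum_comm]
    exact Finset.sum_congr rfl fun p _ => Finset.sum_congr rfl fun q _ => by ring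

lemma H_reverse (σ : List ℕ) (d e : ℕ) : H σ.reverse e d = H σ d e := by
  induction σ generalizing d with
  | nil => simp [H, B_symm]
  | cons r σ ih => simp only [List.reverse_cons, H_append, H, ih]

/-- lists of length r and sum t -/
def A : ℕ → ℕ → Finset (List ℕ)
  | 0, t => if t = 0 then {[]} else ∅
  | r+1, t => (antidiagonal t).biUnion fun p => (A r p.2).image (List.cons p.1)

lemma mem_A (r t : ℕ) (l : List ℕ) : l ∈ A r t ↔ l.length = r ∧ l.sum = t := by
  induction r generalizing t l with
  | zero =>
    unfold A
    split_ifs with h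
    · simp only [Finset.mem_singleton, List.length_eq_zero_iff]
      constructor
      · rintro rfl; simp [h]
      · exact fun h => h.1
    · simp only [Finset.notMem_empty, List.length_eq_zero_iff, false_iff]
      rintro ⟨rfl, h2⟩
      exact h h2.symm
  | succ r ih =>
    simp only [A, Finset.mem_biUnion, Finset.mem_image, ih, HasAntidiagonal.mem_antidiagonal]
    constructor
    · rintro ⟨p, hp, l', ⟨h1, h2⟩, rfl⟩
      simp [h1, h2, hp]
    · rintro ⟨h1, h2⟩
      rcases l with _ | ⟨x, l⟩
      · simp at h1
      · exact ⟨(x, l.sum), by simpa using h2, l, ⟨by simpa using h1, rfl⟩, rfl⟩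

lemma sum_A (r t : ℕ) : ∑ l ∈ A r t, (X : ℤ[X]) ^ nz l = PowerSeries.coeff t (f ^ r) := by
  induction r generalizing t with
  | zero =>
    unfold A
    split_ifs with h <;> simp [PowerSeries.coeff_one, h, nz]
  | succ r ih =>
    rw [A, Finset.sum_biUnion, pow_succ', PowerSeries.coeff_mul]
    · refine Finset.sum_congr rfl fun p _ => ?_
      rw [Finset.sum_image (by intro a _ b _ h; simpa using h), ← ih, Finset.mul_sum]
      refine Finset.sum_congr rfl fun l _ => ?_
      by_cases h : p.1 = 0 <;> simp [nz, f, h, pow_succ, mul_comm]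
    · intro p hp q hq hpq
      rw [Function.onFun, Finset.disjoint_left]
      intro l h1 h2
      simp only [Finset.mem_image] at h1 h2
      obtain ⟨a, ha, rfl⟩ := h1
      obtain ⟨b, hb, h⟩ := h2
      simp only [List.cons.injEq] at h
      simp only [Finset.coe_sort_coe, Finset.mem_coe, HasAntidiagonal.mem_antidiagonal] at hp hq
      apply hpq
      ext <;> omega

def P : List ℕ → ℕ → Finset (List ℕ)
  | [], _ => {[]}
  | r :: σ, d => (antidiagonal (d + r)).biUnion fun p =>
      (A r p.1 ×ˢ P σ p.2).image fun q => q.1 ++ q.2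

lemma sum_P (σ : List ℕ) (d : ℕ) : ∑ l ∈ P σ d, (X : ℤ[X]) ^ nz l = H σ d 0 := by
  induction σ generalizing d with
  | nil => simp [P, H, B_zero_right, nz]
  | cons r σ ih =>
    rw [P, Finset.sum_biUnion, H]
    · refine Finset.sum_congr rfl fun p _ => ?_
      rw [Finset.sum_image, ← ih, ← sum_A, Finset.sum_mul_sum, Finset.sum_product]
      · refine Finset.sum_congr rfl fun a _ => Finset.sum_congr rfl fun b _ => ?_
        simp [nz, pow_add]
      · rintro ⟨a, b⟩ h ⟨a', b'⟩ h' hh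
        simp only [Finset.mem_coe, Finset.mem_product, mem_A] at h h'
        have := List.append_inj hh (by simp [h.1.1, h'.1.1])
        exact Prod.ext this.1 this.2
    · intro p hp q hq hpq
      rw [Function.onFun, Finset.disjoint_left]
      intro l h1 h2
      simp only [Finset.mem_image, Finset.mem_product, mem_A] at h1 h2
      obtain ⟨⟨a, b⟩, ⟨ha, hb⟩, rfl⟩ := h1
      obtain ⟨⟨a', b'⟩, ⟨ha', hb'⟩, h⟩ := h2
      have := (List.append_inj h (by simp [ha.1, ha'.1])).1
      simp only at this ha ha'
      rw [this] at ha'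
      simp only [Finset.mem_coe, HasAntidiagonal.mem_antidiagonal] at hp hq
      apply hpq
      ext <;> omega

lemma mem_P (σ : List ℕ) (d : ℕ) (l : List ℕ) : l ∈ P σ d ↔ l.length = σ.sum ∧
    ∀ i, 1 ≤ i → i ≤ σ.length → (l.take (pSum σ i)).sum ≤ pSum σ i + d := by
  induction σ generalizing d l with
  | nil =>
    simp only [P, Finset.mem_singleton, List.sum_nil, List.length_eq_zero_iff, List.length_nil]
    constructor
    · rintro rfl; exact ⟨rfl, by intros; omega⟩
    · exact fun h => h.1
  | cons r σ ih =>
    simp only [P, Finset.mem_biUnion, Finset.mem_image, Finset.mem_product, mem_A, ih,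
      HasAntidiagonal.mem_antidiagonal, Prod.exists]
    constructor
    · rintro ⟨t, d', ht, a, b, ⟨⟨ha, hat⟩, hb, hbs⟩, rfl⟩
      refine ⟨by simp [ha, hb], ?_⟩
      intro i h1 h2
      obtain ⟨i, rfl⟩ := Nat.exists_eq_add_of_le' h1
      have e : pSum (r :: σ) (i+1) = r + pSum σ i := by simp [pSum]
      rw [e, ← ha, List.take_length_add_append, List.sum_append, hat]
      rcases Nat.eq_zero_or_pos i with rfl | hi
      · simp [pSum]; omega
      · have := hbs i hi (by simpa using h2)
        omega
    · rintro ⟨hl, h⟩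
      have hl' : l.length = r + σ.sum := by simpa using hl
      have hd : l.take r ++ l.drop r = l := List.take_append_drop r l
      have h1 := h 1 le_rfl (by simp)
      have e1 : pSum (r :: σ) 1 = r := by simp [pSum]
      rw [e1] at h1
      have hlen : (l.take r).length = r := by simp; omega
      refine ⟨(l.take r).sum, d + r - (l.take r).sum, by omega, l.take r, l.drop r,
        ⟨⟨hlen, rfl⟩, by simp; omega, ?_⟩, hd⟩
      intro i hi hi2
      have := h (i+1) (by omega) (by simpa using hi2)
      have e : pSum (r :: σ) (i+1) = r + pSum σ i := by simp [pSum]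
      rw [e, List.take_add, List.sum_append] at this
      omega

lemma nz_ofFn {n : ℕ} (a : Fin n → ℕ) : nz (List.ofFn a) = nonzeroCount a := by
  unfold nonzeroCount
  rw [Finset.card_filter]
  induction n with
  | zero => simp [nz]
  | succ n ih =>
    rw [Fin.sum_univ_succ, ← ih (fun i => a i.succ), List.ofFn_succ, nz, List.countP_cons, nz]
    simp [add_comm]

lemma hVec_eq (n : ℕ) (σ : List ℕ) (hsum : σ.sum = n) (i : ℕ) :
    (hVec n σ i : ℤ) = (H σ 0 0).coeff i := by
  have h1 : (H σ 0 0).coeff i = (((P σ 0).filter fun l => nz l = i).card : ℤ) := by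
    rw [← sum_P, Polynomial.finsetSum_coeff, Finset.card_filter]
    push_cast
    refine Finset.sum_congr rfl fun l _ => ?_
    simp [Polynomial.coeff_X_pow, eq_comm]
  rw [h1, ← Set.ncard_coe_finset, hVec]
  congr 1
  rw [← Set.ncard_image_of_injective _ (List.ofFn_injective (n := n))]
  congr 1
  ext l
  simp only [Set.mem_image, Set.mem_setOf_eq, Finset.coe_filter, mem_P, memP,
    ← List.sum_take_ofFn, ← nz_ofFn, add_zero]
  constructor
  · rintro ⟨a, ⟨h, h'⟩, rfl⟩
    exact ⟨⟨by simp [hsum], h⟩, h'⟩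
  · rintro ⟨⟨hl, h⟩, h'⟩
    obtain rfl : l.length = n := hl.trans hsum
    refine ⟨l.get, ?_, List.ofFn_get l⟩
    rw [List.ofFn_get]
    exact ⟨h, h'⟩

end HRev

/-- `h_i(σ) = h_i(rev(σ))` for all `0 ≤ i ≤ n`. -/
theorem hVec_reverse (n : ℕ) (hn : 0 < n) (σ : List ℕ)
    (hpos : ∀ r ∈ σ, 0 < r) (hsum : σ.sum = n) :
    ∀ i ≤ n, hVec n σ i = hVec n σ.reverse i := by
  intro i _
  have h1 := HRev.hVec_eq n σ hsum i
  have h2 := HRev.hVec_eq n σ.reverse (by rw [List.sum_reverse, hsum]) i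
  rw [HRev.H_reverse, ← h1] at h2
  exact_mod_cast h2.symm
end

section
/- Let σ = (r_1,...,r_k) be a composition of a positive integer n with partial sums s_i, and let m ≥ 1. The number of points (a_1,...,a_n) ∈ ℕ^n with a_1 + ... + a_{s_i} ≤ m·s_i for all i ∈ {1,...,k} equals the number of tuples (b_1, b_2, ..., b_{mn}) ∈ ℕ^{mn} satisfying b_1 + b_2 + ... + b_{mn} ≤ n and b_{s_i·m+1} + b_{s_i·m+2} + ... + b_{mn} ≤ n − s_i for every i ∈ {1,...,k−1}. -/
open Finset Polynomial

/-- Prefix sums. -/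
def preS {n : ℕ} (a : Fin n → ℕ) (k : ℕ) : ℕ :=
  ∑ j ∈ Finset.univ.filter (fun j : Fin n => (j : ℕ) < k), a j

/-- Suffix sums. -/
def sufS {n : ℕ} (b : Fin n → ℕ) (v : ℕ) : ℕ :=
  ∑ j ∈ Finset.univ.filter (fun j : Fin n => v ≤ (j : ℕ)), b j

lemma preS_zero {n : ℕ} (a : Fin n → ℕ) : preS a 0 = 0 := by simp [preS]

lemma preS_succ {n : ℕ} (a : Fin n → ℕ) (j : Fin n) :
    preS a (j + 1) = preS a j + a j := by
  unfold preS
  have : (Finset.univ.filter (fun i : Fin n => (i : ℕ) < j + 1))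
      = insert j (Finset.univ.filter (fun i : Fin n => (i : ℕ) < j)) := by
    ext i
    simp only [Finset.mem_filter, Finset.mem_univ, true_and, Finset.mem_insert, Fin.ext_iff]
    omega
  rw [this, Finset.sum_insert (by simp), add_comm]

lemma preS_mono {n : ℕ} (a : Fin n → ℕ) : Monotone (preS a) := by
  intro k l h
  unfold preS
  apply Finset.sum_le_sum_of_subset
  intro i
  simp only [Finset.mem_filter, Finset.mem_univ, true_and]
  omega

lemma sufS_ge {n : ℕ} (b : Fin n → ℕ) {v : ℕ} (h : n ≤ v) : sufS b v = 0 := by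
  unfold sufS
  apply Finset.sum_eq_zero
  intro i
  simp only [Finset.mem_filter, Finset.mem_univ, true_and]
  have := i.2
  omega

lemma sufS_succ {n : ℕ} (b : Fin n → ℕ) (j : Fin n) :
    sufS b j = sufS b (j + 1) + b j := by
  unfold sufS
  have : (Finset.univ.filter (fun i : Fin n => (j : ℕ) ≤ i))
      = insert j (Finset.univ.filter (fun i : Fin n => (j : ℕ) + 1 ≤ i)) := by
    ext i
    simp only [Finset.mem_filter, Finset.mem_univ, true_and, Finset.mem_insert, Fin.ext_iff]
    omega
  rw [this, Finset.sum_insert (by simp), add_comm]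

lemma sufS_anti {n : ℕ} (b : Fin n → ℕ) : Antitone (sufS b) := by
  intro k l h
  unfold sufS
  apply Finset.sum_le_sum_of_subset
  intro i
  simp only [Finset.mem_filter, Finset.mem_univ, true_and]
  omega

lemma preS_inj {n : ℕ} {a a' : Fin n → ℕ}
    (h : ∀ k, 1 ≤ k → k ≤ n → preS a k = preS a' k) : a = a' := by
  funext j
  have h1 := preS_succ a j
  have h2 := preS_succ a' j
  have h3 := h (j + 1) (by omega) (by omega)
  have h4 : preS a j = preS a' j := by
    rcases Nat.eq_zero_or_pos (j : ℕ) with h0 | h0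
    · rw [h0, preS_zero, preS_zero]
    · exact h j h0 (by omega)
  omega

lemma sufS_inj {n : ℕ} {b b' : Fin n → ℕ}
    (h : ∀ v, v < n → sufS b v = sufS b' v) : b = b' := by
  funext j
  have h1 := sufS_succ b j
  have h2 := sufS_succ b' j
  have h3 := h j j.2
  have h4 : sufS b (j + 1) = sufS b' (j + 1) := by
    rcases Nat.lt_or_ge ((j : ℕ) + 1) n with h0 | h0
    · exact h _ h0
    · rw [sufS_ge b h0, sufS_ge b' h0]
  omega

lemma exists_preS (n : ℕ) (E : ℕ → ℕ) (hE : Monotone E) (h0 : E 0 = 0) :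
    ∃ a : Fin n → ℕ, ∀ k, k ≤ n → preS a k = E k := by
  refine ⟨fun j => E (j + 1) - E j, ?_⟩
  intro k
  induction k with
  | zero => intro _; rw [preS_zero, h0]
  | succ k ih =>
    intro hk
    have h1 := preS_succ (fun j : Fin n => E (j + 1) - E j) ⟨k, hk⟩
    have h2 := hE (Nat.le_succ k)
    have h3 := ih (by omega)
    simp only [Nat.succ_eq_add_one] at *
    omega

lemma exists_sufS (n : ℕ) (D : ℕ → ℕ) (hD : Antitone D) (h0 : D n = 0) :
    ∃ b : Fin n → ℕ, ∀ v, v ≤ n → sufS b v = D v := by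
  refine ⟨fun j => D j - D (j + 1), ?_⟩
  intro v hv
  induction hv using Nat.decreasingInduction with
  | self => rw [sufS_ge _ le_rfl, h0]
  | of_succ k hk ih =>
    have h1 := sufS_succ (fun j : Fin n => D j - D (j + 1)) ⟨k, hk⟩
    have h2 := hD (Nat.le_succ k)
    simp only [Nat.succ_eq_add_one] at *
    omega

/-- The two lattice path encodings agree. -/
def PathRel {n N : ℕ} (a : Fin n → ℕ) (b : Fin N → ℕ) : Prop :=
  ∀ k v, 1 ≤ k → k ≤ n → v < N → (v < preS a k ↔ n < sufS b v + k)

lemma exists_b {n N : ℕ} (a : Fin n → ℕ) (ha : preS a n ≤ N) :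
    ∃ b : Fin N → ℕ, sufS b 0 ≤ n ∧ PathRel a b := by
  obtain ⟨b, hb⟩ := exists_sufS N
    (fun v => ((Finset.Icc 1 n).filter (fun k => v < preS a k)).card)
    (by
      intro v w h
      apply Finset.card_le_card
      intro k
      simp only [Finset.mem_filter]
      rintro ⟨h1, h2⟩
      exact ⟨h1, by omega⟩)
    (by
      rw [Finset.card_eq_zero, Finset.filter_eq_empty_iff]
      intro k hk
      rw [Finset.mem_Icc] at hk
      have := preS_mono a hk.2
      omega)
  refine ⟨b, ?_, ?_⟩
  · rw [hb 0 (by omega)]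
    refine (Finset.card_filter_le _ _).trans ?_
    simp
  · intro k v hk1 hkn hv
    rw [hb v hv.le]
    constructor
    · intro h
      have : Finset.Icc k n ⊆ (Finset.Icc 1 n).filter (fun k => v < preS a k) := by
        intro l hl
        rw [Finset.mem_Icc] at hl
        rw [Finset.mem_filter, Finset.mem_Icc]
        have := preS_mono a hl.1
        exact ⟨by omega, by omega⟩
      have := Finset.card_le_card this
      rw [Nat.card_Icc] at this
      omega
    · intro h
      by_contra hc
      have : (Finset.Icc 1 n).filter (fun k => v < preS a k) ⊆ Finset.Icc (k + 1) n := by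
        intro l hl
        rw [Finset.mem_filter, Finset.mem_Icc] at hl
        rw [Finset.mem_Icc]
        refine ⟨?_, hl.1.2⟩
        by_contra hlk
        have := preS_mono a (show l ≤ k by omega)
        omega
      have := Finset.card_le_card this
      rw [Nat.card_Icc] at this
      omega

lemma exists_a {n N : ℕ} (b : Fin N → ℕ) (hb : sufS b 0 ≤ n) :
    ∃ a : Fin n → ℕ, preS a n ≤ N ∧ PathRel a b := by
  obtain ⟨a, ha⟩ := exists_preS n
    (fun k => ((Finset.range N).filter (fun v => n < sufS b v + k)).card)
    (by
      intro v w h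
      apply Finset.card_le_card
      intro k
      simp only [Finset.mem_filter]
      rintro ⟨h1, h2⟩
      exact ⟨h1, by omega⟩)
    (by
      rw [Finset.card_eq_zero, Finset.filter_eq_empty_iff]
      intro v hv
      have := sufS_anti b (Nat.zero_le v)
      omega)
  refine ⟨a, ?_, ?_⟩
  · rw [ha n le_rfl]
    refine (Finset.card_filter_le _ _).trans ?_
    simp
  · intro k v hk1 hkn hv
    rw [ha k hkn]
    constructor
    · intro h
      by_contra hc
      have : (Finset.range N).filter (fun v => n < sufS b v + k) ⊆ Finset.range v := by
        intro l hl
        rw [Finset.mem_filter, Finset.mem_range] at hl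
        rw [Finset.mem_range]
        by_contra hlk
        have := sufS_anti b (show v ≤ l by omega)
        omega
      have := Finset.card_le_card this
      rw [Finset.card_range] at this
      omega
    · intro h
      have : Finset.range (v + 1) ⊆ (Finset.range N).filter (fun v => n < sufS b v + k) := by
        intro l hl
        rw [Finset.mem_range] at hl
        rw [Finset.mem_filter, Finset.mem_range]
        have := sufS_anti b (show l ≤ v by omega)
        exact ⟨by omega, by omega⟩
      have := Finset.card_le_card this
      rw [Finset.card_range] at this
      omega

lemma uniq_a {n N : ℕ} {a a' : Fin n → ℕ} {b : Fin N → ℕ} (ha : preS a n ≤ N)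
    (ha' : preS a' n ≤ N) (h : PathRel a b) (h' : PathRel a' b) : a = a' := by
  apply preS_inj
  intro k h1 h2
  have e1 := preS_mono a h2
  have e2 := preS_mono a' h2
  rcases lt_trichotomy (preS a k) (preS a' k) with hl | hl | hl
  · have := h k (preS a k) h1 h2 (by omega)
    have := h' k (preS a k) h1 h2 (by omega)
    omega
  · exact hl
  · have := h k (preS a' k) h1 h2 (by omega)
    have := h' k (preS a' k) h1 h2 (by omega)
    omega

lemma uniq_b {n N : ℕ} {a : Fin n → ℕ} {b b' : Fin N → ℕ} (hb : sufS b 0 ≤ n)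
    (hb' : sufS b' 0 ≤ n) (h : PathRel a b) (h' : PathRel a b') : b = b' := by
  apply sufS_inj
  intro v hv
  have e1 := sufS_anti b (Nat.zero_le v)
  have e2 := sufS_anti b' (Nat.zero_le v)
  rcases lt_trichotomy (sufS b v) (sufS b' v) with hl | hl | hl
  · have := h (n - sufS b v) v (by omega) (by omega) hv
    have := h' (n - sufS b v) v (by omega) (by omega) hv
    omega
  · exact hl
  · have := h (n - sufS b' v) v (by omega) (by omega) hv
    have := h' (n - sufS b' v) v (by omega) (by omega) hv
    omega

lemma rel_cond {n m s : ℕ} (hm : 1 ≤ m) (hs : s ≤ n) {a : Fin n → ℕ} {b : Fin (m * n) → ℕ}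
    (ha : preS a n ≤ m * n) (hb : sufS b 0 ≤ n) (h : PathRel a b) :
    preS a s ≤ m * s ↔ sufS b (s * m) ≤ n - s := by
  rcases Nat.eq_zero_or_pos s with rfl | h0
  · simp [preS_zero, hb]
  · rcases hs.lt_or_eq with h1 | rfl
    · have := h s (s * m) h0 hs (by rw [mul_comm]; exact Nat.mul_lt_mul_of_pos_left h1 hm)
      rw [mul_comm m s]
      omega
    · rw [sufS_ge b (by rw [mul_comm])]
      simp [ha]

/-- `Ehr(Q_σ, m)` equals the number of tuples `(b₁, …, b_{mn}) ∈ ℕ^{mn}` with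
`b₁ + ⋯ + b_{mn} ≤ n` and `b_{s_i m + 1} + ⋯ + b_{mn} ≤ n - s_i` for
`i ∈ [k-1]`. -/
theorem ehrhart_eq_count_b_tuples (n : ℕ) (hn : 0 < n) (σ : List ℕ)
    (hpos : ∀ r ∈ σ, 0 < r) (hsum : σ.sum = n) (m : ℕ) (hm : 1 ≤ m) :
    ehrCount n σ m =
      {b : Fin (m * n) → ℕ |
        (∑ j, b j) ≤ n ∧
        ∀ i, 1 ≤ i → i ≤ σ.length - 1 →
          (∑ j ∈ Finset.univ.filter
              (fun j : Fin (m * n) => pSum σ i * m ≤ (j : ℕ)), b j)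
            ≤ n - pSum σ i}.ncard := by
  have hps : ∀ i, pSum σ i ≤ n := by
    intro i
    have := List.sum_take_add_sum_drop σ i
    unfold pSum
    omega
  have hlen : 1 ≤ σ.length := by
    rcases σ with _ | ⟨x, l⟩
    · simp at hsum; omega
    · simp
  have hlast : pSum σ σ.length = n := by
    unfold pSum; rw [List.take_length, hsum]
  have hz : ∀ b : Fin (m * n) → ℕ, ∑ j, b j = sufS b 0 := by
    intro b; simp [sufS]
  have hX : ∀ a : Fin n → ℕ, (∀ i, 1 ≤ i → i ≤ σ.length → preS a (pSum σ i) ≤ m * pSum σ i) →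
      preS a n ≤ m * n := by
    intro a h
    have := h _ hlen le_rfl
    rwa [hlast] at this
  unfold ehrCount
  have key : ∀ a : Fin n → ℕ, ∀ b : Fin (m * n) → ℕ, preS a n ≤ m * n → sufS b 0 ≤ n →
      PathRel a b →
      ((∀ i, 1 ≤ i → i ≤ σ.length → preS a (pSum σ i) ≤ m * pSum σ i) ↔
       (∀ i, 1 ≤ i → i ≤ σ.length - 1 → sufS b (pSum σ i * m) ≤ n - pSum σ i)) := by
    intro a b ha hb hr
    constructor
    · intro h i h1 h2
      exact (rel_cond hm (hps i) ha hb hr).1 (h i h1 (by omega))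
    · intro h i h1 h2
      rcases h2.lt_or_eq with h3 | rfl
      · exact (rel_cond hm (hps i) ha hb hr).2 (h i h1 (by omega))
      · rw [hlast]; exact ha
  choose f hf0 hfr using fun (a : Fin n → ℕ) (ha : preS a n ≤ m * n) => exists_b a ha
  refine Set.ncard_congr (fun a ha => f a (hX a ha)) ?_ ?_ ?_
  · intro a ha
    refine ⟨?_, (key a _ (hX a ha) (hf0 a (hX a ha)) (hfr a (hX a ha))).1 ha⟩
    rw [hz]
    exact hf0 a (hX a ha)
  · intro a a' ha ha' h
    have r1 := hfr a (hX a ha)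
    have r2 := hfr a' (hX a' ha')
    have h' : f a (hX a ha) = f a' (hX a' ha') := h
    rw [← h'] at r2
    exact uniq_a (hX a ha) (hX a' ha') r1 r2
  · rintro b ⟨hb0, hb⟩
    rw [hz] at hb0
    obtain ⟨a, ha, hr⟩ := exists_a b hb0
    have hmem := (key a b ha hb0 hr).2 hb
    exact ⟨a, hmem, uniq_b (hf0 a ha) hb0 (hfr a ha) hr⟩
end

section
/- For every n ∈ ℕ, the polynomial identity Σ_{i=0}^{n} C(n,i)^2 t^i = Σ_{i=0}^{⌊n/2⌋} C(n,i)·C(n−i,i) t^i (1+t)^{n−2i} holds, where C(a,b) denotes the binomial coefficient. -/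
theorem cbg_swap (m a b : ℕ) :
    m.choose a * (m - a).choose b = m.choose b * (m - b).choose a := by
  have h1 := Nat.choose_mul (n := m) (k := a + b) (s := a) (by omega)
  have h2 := Nat.choose_mul (n := m) (k := a + b) (s := b) (by omega)
  rw [Nat.add_sub_cancel_left] at h1
  rw [Nat.add_sub_cancel] at h2
  rw [← h1, ← h2, Nat.choose_symm_add]

theorem cbg_term (n k i : ℕ) (hik : i ≤ k) :
    n.choose i * (n - i).choose i * (n - 2 * i).choose (k - i) =
      n.choose k * (k.choose i * (n - k).choose i) := by
  have h1 := Nat.choose_mul (n := n) (k := k) (s := i) hik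
  have h2 := cbg_swap (n - i) i (k - i)
  rw [show n - i - i = n - 2 * i by omega, show n - i - (k - i) = n - k by omega] at h2
  rw [← mul_assoc, h1, mul_assoc, h2, mul_assoc]

theorem cbg_vand (n k : ℕ) (hk : k ≤ n) :
    ∑ i ∈ Finset.range (n / 2 + 1), k.choose i * (n - k).choose i = n.choose k := by
  have h := Nat.add_choose_eq (n - k) k k
  rw [Nat.sub_add_cancel hk, Finset.Nat.sum_antidiagonal_eq_sum_range_succ_mk] at h
  rw [h]
  have e1 : ∑ i ∈ Finset.range (n / 2 + 1), k.choose i * (n - k).choose i =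
      ∑ i ∈ Finset.range (n + 1), k.choose i * (n - k).choose i := by
    apply Finset.sum_subset
    · intro i; simp only [Finset.mem_range]; omega
    · intro i _ h2
      simp only [Finset.mem_range] at h2
      rcases Nat.lt_or_ge k i with h3 | h3
      · simp [Nat.choose_eq_zero_of_lt h3]
      · rw [Nat.choose_eq_zero_of_lt (show n - k < i by omega), mul_zero]
  have e2 : ∑ i ∈ Finset.range (k + 1), k.choose i * (n - k).choose i =
      ∑ i ∈ Finset.range (n + 1), k.choose i * (n - k).choose i := by
    apply Finset.sum_subset
    · intro i; simp only [Finset.mem_range]; omega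
    · intro i _ h2
      simp only [Finset.mem_range] at h2
      rw [Nat.choose_eq_zero_of_lt (show k < i by omega), zero_mul]
  rw [e1, ← e2]
  apply Finset.sum_congr rfl
  intro i hi
  simp only [Finset.mem_range] at hi
  simp only
  rw [Nat.choose_symm (show i ≤ k by omega), mul_comm]

open Finset Polynomial

/-- The gamma-expansion of `∑ C(n,i)² tⁱ`:
`∑_{i=0}^{n} C(n,i)² tⁱ = ∑_{i=0}^{⌊n/2⌋} C(n,i)·C(n-i,i) tⁱ (1+t)^{n-2i}`. -/
theorem central_binomial_gamma (n : ℕ) :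
    (∑ i ∈ Finset.range (n + 1),
        Polynomial.C ((n.choose i) ^ 2) * X ^ i : Polynomial ℕ) =
      ∑ i ∈ Finset.range (n / 2 + 1),
        Polynomial.C (n.choose i * (n - i).choose i) * X ^ i *
          (1 + X) ^ (n - 2 * i) := by
  ext k
  have hL : (∑ i ∈ Finset.range (n + 1),
        Polynomial.C ((n.choose i) ^ 2) * X ^ i : Polynomial ℕ).coeff k = n.choose k ^ 2 := by
    simp only [finset_sum_coeff, coeff_C_mul_X_pow, Finset.sum_ite_eq, Finset.mem_range]
    split_ifs with h
    · rfl
    · rw [Nat.choose_eq_zero_of_lt (by omega)]; rfl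
  have hR : ∀ i ∈ Finset.range (n / 2 + 1),
      (Polynomial.C (n.choose i * (n - i).choose i) * X ^ i *
          (1 + X) ^ (n - 2 * i) : Polynomial ℕ).coeff k =
        n.choose k * (k.choose i * (n - k).choose i) := by
    intro i _
    rw [mul_assoc, coeff_C_mul, coeff_X_pow_mul']
    split_ifs with h
    · rw [coeff_one_add_X_pow, Nat.cast_id, cbg_term n k i h]
    · rw [Nat.choose_eq_zero_of_lt (show k < i by omega)]; simp
  rw [hL, finset_sum_coeff, Finset.sum_congr rfl hR, ← Finset.mul_sum]
  rcases Nat.lt_or_ge n k with h | h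
  · simp [Nat.choose_eq_zero_of_lt h]
  · rw [cbg_vand n k h, sq]
end

section
/- Let n be a positive integer and let σ = (1,1,...,1) be the composition of n with all parts equal to 1, so that P_σ consists of all (a_1,...,a_n) ∈ ℕ^n with a_1 + ... + a_j ≤ j for every j ∈ {1,...,n}. Then for every 0 ≤ i ≤ n, (i+1) · h_i(σ) = C(n,i) · C(n+1,i), i.e., h_i(σ) is the Narayana number (1/(i+1))·C(n,i)·C(n+1,i). -/
open Finset Polynomial

/-- Points with partial sums bounded by the index, total at most `m`, `k` nonzero coordinates. -/
def narS (n m k : ℕ) : Set (Fin n → ℕ) :=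
  {a | (∀ j, j ≤ n → (∑ t : Fin n, if (t : ℕ) < j then a t else 0) ≤ j) ∧
    (∑ t, a t) ≤ m ∧ (∑ t, if a t ≠ 0 then 1 else 0) = k}

lemma narS_finite (n m k : ℕ) : (narS n m k).Finite := by
  apply (Set.finite_Iic (fun _ : Fin n => m)).subset
  rintro a ⟨_, h, _⟩ t
  exact (Finset.single_le_sum (f := a) (fun _ _ => Nat.zero_le _) (Finset.mem_univ t)).trans h

/-- Shifted binomial. -/
def cpred (n : ℕ) : ℕ → ℕ
  | 0 => 0
  | k + 1 => n.choose k

lemma narS_fiber (n m k e a : ℕ) (hm : m ≤ n + 1) (ha : a ≤ m)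
    (he : e = if a ≠ 0 then 1 else 0) :
    {x ∈ narS (n + 1) m (k + e) | x (Fin.last n) = a} =
      (fun b : Fin n → ℕ => (Fin.snoc b a : Fin (n + 1) → ℕ)) '' narS n (m - a) k := by
  ext x
  simp only [Set.mem_image, Set.mem_ofPred_eq, narS]
  constructor
  · rintro ⟨⟨h1, h2, h3⟩, h4⟩
    refine ⟨Fin.init x, ⟨?_, ?_, ?_⟩, ?_⟩
    · intro j hj
      have := h1 j (by omega)
      rw [Fin.sum_univ_castSucc] at this
      simp only [Fin.val_castSucc] at this
      simp only [Fin.init]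
      omega
    · rw [Fin.sum_univ_castSucc] at h2
      simp only [Fin.init]
      omega
    · rw [Fin.sum_univ_castSucc, h4, ← he] at h3
      exact Nat.add_right_cancel h3
    · rw [← h4]; exact Fin.snoc_init_self x
  · rintro ⟨b, ⟨h1, h2, h3⟩, rfl⟩
    refine ⟨⟨?_, ?_, ?_⟩, by simp⟩
    · intro j hj
      rw [Fin.sum_univ_castSucc]
      simp only [Fin.val_castSucc, Fin.snoc_castSucc, Fin.snoc_last, Fin.val_last]
      by_cases hjn : j ≤ n
      · have := h1 j hjn
        rw [if_neg (by omega)]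
        omega
      · have : ∑ t : Fin n, (if (t : ℕ) < j then b t else 0) = ∑ t, b t :=
          Finset.sum_congr rfl (fun t _ => if_pos (by omega))
        rw [this, if_pos (by omega)]
        omega
    · rw [Fin.sum_univ_castSucc]
      simp only [Fin.snoc_castSucc, Fin.snoc_last]
      omega
    · rw [Fin.sum_univ_castSucc]
      simp only [Fin.snoc_castSucc, Fin.snoc_last]
      rw [h3, he]

lemma narS_fiber_card (n m k e a : ℕ) (hm : m ≤ n + 1) (ha : a ≤ m)
    (he : e = if a ≠ 0 then 1 else 0) :
    {x ∈ narS (n + 1) m (k + e) | x (Fin.last n) = a}.ncard = (narS n (m - a) k).ncard := by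
  rw [narS_fiber n m k e a hm ha he, Set.ncard_image_of_injective]
  intro b c h
  simpa using congrArg Fin.init h

lemma narS_rec (n m k : ℕ) (hm : m ≤ n + 1) :
    (narS (n + 1) m (k + 1)).ncard =
      (narS n m (k + 1)).ncard + ∑ t ∈ Finset.range m, (narS n t k).ncard := by
  classical
  have hf := narS_finite (n + 1) m (k + 1)
  have h1 : (narS (n + 1) m (k + 1)).ncard = ∑ a ∈ Finset.range (m + 1),
      {x ∈ narS (n + 1) m (k + 1) | x (Fin.last n) = a}.ncard := by
    rw [Set.ncard_eq_toFinset_card _ hf,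
      Finset.card_eq_sum_card_fiberwise (f := fun x => x (Fin.last n)) (t := Finset.range (m + 1))]
    · refine Finset.sum_congr rfl fun a _ => ?_
      rw [← Set.ncard_coe_finset]
      congr 1
      ext x
      simp
    · intro x hx
      have hx' : x ∈ narS (n + 1) m (k + 1) := by simpa using hx
      have := (Finset.single_le_sum (f := x) (fun _ _ => Nat.zero_le _)
        (Finset.mem_univ (Fin.last n))).trans hx'.2.1
      simp only [Finset.coe_range, Set.mem_Iio]
      omega
  rw [h1, Finset.sum_range_succ', add_comm,
    ← Finset.sum_range_reflect (fun t => (narS n t k).ncard)]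
  congr 1
  · exact narS_fiber_card n m (k + 1) 0 0 hm (Nat.zero_le _) (by simp)
  · refine Finset.sum_congr rfl fun a ha => ?_
    rw [Finset.mem_range] at ha
    rw [narS_fiber_card n m k 1 (a + 1) hm (by omega) (by simp)]
    congr 2
    omega

lemma narS_zero (n m : ℕ) : (narS n m 0).ncard = 1 := by
  rw [Set.ncard_eq_one]
  refine ⟨0, ?_⟩
  ext a
  simp only [narS, Set.mem_ofPred_eq, Set.mem_singleton_iff]
  constructor
  · rintro ⟨_, _, h⟩
    funext t
    rw [Finset.sum_eq_zero_iff] at h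
    have := h t (Finset.mem_univ t)
    by_contra h0
    simp at this
    exact h0 this
  · rintro rfl
    simp

lemma sum_choose_range (m k : ℕ) : ∑ t ∈ Finset.range m, t.choose k = m.choose (k + 1) := by
  induction m with
  | zero => simp
  | succ m ih => rw [Finset.sum_range_succ, ih, Nat.choose_succ_succ, add_comm]

lemma narS_card (n : ℕ) : ∀ m k, m ≤ n + 1 →
    (narS n m k).ncard + m.choose (k + 1) * cpred n k = m.choose k * n.choose k := by
  induction n with
  | zero =>
    intro m k hm
    cases k with
    | zero => simp [narS_zero, cpred]
    | succ k =>
      have : narS 0 m (k + 1) = ∅ := by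
        ext a; simp [narS]
      rw [this, Nat.choose_eq_zero_of_lt (by omega : m < k + 1 + 1)]
      simp
  | succ n ih =>
    have key : ∀ m k, m ≤ n + 1 →
        (narS (n + 1) m k).ncard + m.choose (k + 1) * cpred (n + 1) k
          = m.choose k * (n + 1).choose k := by
      intro m k hm
      cases k with
      | zero => simp [narS_zero, cpred]
      | succ k =>
        rw [narS_rec n m k hm]
        have h1 := ih m (k + 1) hm
        have h2 : ∑ t ∈ Finset.range m, (narS n t k).ncard + m.choose (k + 2) * cpred n k
            = m.choose (k + 1) * n.choose k := by
          rw [← sum_choose_range m (k + 1), ← sum_choose_range m k, Finset.sum_mul,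
            Finset.sum_mul, ← Finset.sum_add_distrib]
          refine Finset.sum_congr rfl fun t ht => ?_
          rw [Finset.mem_range] at ht
          exact ih t k (by omega)
        have h3 : cpred (n + 1) (k + 1) = cpred n (k + 1) + cpred n k := by
          cases k with
          | zero => simp [cpred]
          | succ k => simp only [cpred]; rw [Nat.choose_succ_succ, add_comm]
        rw [h3, Nat.choose_succ_succ n k]
        linarith
    intro m k hm
    rcases Nat.lt_or_ge m (n + 2) with h | h
    · exact key m k (by omega)
    · obtain rfl : m = n + 2 := by omega
      have hS : narS (n + 1) (n + 2) k = narS (n + 1) (n + 1) k := by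
        ext a
        simp only [narS, Set.mem_ofPred_eq]
        constructor
        · rintro ⟨h1, h2, h3⟩
          refine ⟨h1, ?_, h3⟩
          have := h1 (n + 1) le_rfl
          rwa [Finset.sum_congr rfl (fun t _ => if_pos t.isLt)] at this
        · rintro ⟨h1, h2, h3⟩
          exact ⟨h1, by omega, h3⟩
      have := key (n + 1) k le_rfl
      rw [hS]
      cases k with
      | zero => simp [narS_zero, cpred]
      | succ k =>
        rw [Nat.choose_succ_succ (n + 1) (k + 1), Nat.choose_succ_succ (n + 1) k]
        simp only [cpred] at this ⊢
        linarith

/-- For the composition `σ = (1,1,…,1)` of `n`, `h_i(σ)` is the Narayana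
number `(1/(i+1))·C(n,i)·C(n+1,i)`. -/
theorem hVec_all_ones_narayana (n : ℕ) (hn : 0 < n) (i : ℕ) (hi : i ≤ n) :
    (i + 1) *
        {a : Fin n → ℕ |
          (∀ j, 1 ≤ j → j ≤ n →
            (∑ t ∈ Finset.univ.filter (fun t : Fin n => (t : ℕ) < j), a t) ≤ j) ∧
          nonzeroCount a = i}.ncard =
      n.choose i * (n + 1).choose i := by
  have hS : {a : Fin n → ℕ |
          (∀ j, 1 ≤ j → j ≤ n →
            (∑ t ∈ Finset.univ.filter (fun t : Fin n => (t : ℕ) < j), a t) ≤ j) ∧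
          nonzeroCount a = i} = narS n n i := by
    ext a
    simp only [narS, Set.mem_ofPred_eq, nonzeroCount, Finset.sum_filter, Finset.card_filter]
    constructor
    · rintro ⟨h1, h2⟩
      refine ⟨?_, ?_, h2⟩
      · intro j hj
        rcases Nat.eq_zero_or_pos j with rfl | h
        · simp
        · exact h1 j h hj
      · have := h1 n hn le_rfl
        rwa [Finset.sum_congr rfl (fun t _ => if_pos t.isLt)] at this
    · rintro ⟨h1, _, h2⟩
      exact ⟨fun j _ hj => h1 j hj, h2⟩
  rw [hS]
  have h := narS_card n n i (by omega)
  cases i with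
  | zero => simp [narS_zero]
  | succ k =>
    simp only [cpred] at h
    have e1 := Nat.choose_succ_right_eq n (k + 1)
    have e2 := Nat.choose_succ_right_eq n k
    obtain ⟨d, rfl⟩ := Nat.exists_eq_add_of_le hi
    rw [show k + 1 + d - (k + 1) = d by omega] at e1
    rw [show k + 1 + d - k = d + 1 by omega] at e2
    rw [Nat.choose_succ_succ (k + 1 + d) k]
    simp only [Nat.succ_eq_add_one] at *
    generalize (k + 1 + d).choose (k + 1 + 1) = A at *
    generalize (k + 1 + d).choose (k + 1) = B at *
    generalize (k + 1 + d).choose k = C at *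
    generalize (narS (k + 1 + d) (k + 1 + d) (k + 1)).ncard = N at *
    zify at *
    linear_combination ((k : ℤ) + 2) * h - C * e1 + B * e2
end
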